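/- arXiv:2405.12064 — 3 statements merged into one kernel-verified Lean document; each statement's English description precedes it below -/
import Mathlib

section
/- Fix a half-bandwidth W ∈ (0, 1/2) and ε ∈ (0, 1). Then there exist constants C₁ > 0, C₂ > 0 and an integer N₁ ≥ 1 (all depending only on W and ε) such that for every N ≥ N₁ and every index l with 0 ≤ l ≤ ⌊2NW(1−ε)⌋, the l-th eigenvalue satisfies 1 − λ_{N,W}^{(l)} ≤ C₁·e^{−C₂·N}. -/
open MeasureTheory Matrix Real Set

/-- The 1-D prolate matrix `B_{N,𝕎}` with entries `∫_𝕎 exp(2πi f (m−n)) df`. -/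
noncomputable def prolate1D (N : ℕ) (𝕎 : Set ℝ) : Matrix (Fin N) (Fin N) ℂ :=
  fun m n => ∫ f in 𝕎,
    Complex.exp (2 * (Real.pi : ℂ) * Complex.I * (f : ℂ) * (((m : ℕ) : ℂ) - ((n : ℕ) : ℂ)))

/-- Fourier series of a finite vector. -/
noncomputable def dftP {N : ℕ} (x : Fin N → ℂ) (f : ℝ) : ℂ :=
  ∑ n : Fin N, Complex.exp (-(2 * (Real.pi : ℂ) * Complex.I * (f : ℂ) * ((n : ℕ) : ℂ))) * x n

/-- Energy of a finite vector in a frequency band. -/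
noncomputable def qP {N : ℕ} (E : Set ℝ) (x : Fin N → ℂ) : ℝ := ∫ f in E, ‖dftP x f‖ ^ 2

lemma dftP_cont {N : ℕ} (x : Fin N → ℂ) : Continuous (dftP x) := by
  unfold dftP; fun_prop

lemma conj_exp_aux (f : ℝ) (n : ℕ) :
    (starRingEnd ℂ) (Complex.exp (-(2 * (Real.pi : ℂ) * Complex.I * (f : ℂ) * (n : ℂ))))
      = Complex.exp (2 * (Real.pi : ℂ) * Complex.I * (f : ℂ) * (n : ℂ)) := by
  rw [← Complex.exp_conj]
  congr 1
  have h2 : (starRingEnd ℂ) (2 : ℂ) = 2 := Complex.conj_ofReal 2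
  simp [h2]

lemma quadP {N : ℕ} (a b : ℝ) (x : Fin N → ℂ) :
    ∑ m, ∑ n, (starRingEnd ℂ) (x m) * prolate1D N (Icc a b) m n * x n
      = ((qP (Icc a b) x : ℝ) : ℂ) := by
  unfold qP prolate1D
  rw [← integral_complex_ofReal]
  have h1 : ∀ f : ℝ, ((‖dftP x f‖ ^ 2 : ℝ) : ℂ) = ∑ m : Fin N, ∑ n : Fin N,
      (starRingEnd ℂ) (x m) * Complex.exp (2 * (Real.pi : ℂ) * Complex.I * (f : ℂ) *
        (((m : ℕ) : ℂ) - ((n : ℕ) : ℂ))) * x n := by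
    intro f
    push_cast
    rw [← Complex.conj_mul', dftP, map_sum, Finset.sum_mul_sum]
    refine Finset.sum_congr rfl fun m _ => Finset.sum_congr rfl fun n _ => ?_
    rw [map_mul, conj_exp_aux, mul_sub, sub_eq_add_neg, Complex.exp_add]
    ring
  simp_rw [h1]
  rw [integral_finsetSum]
  · refine Finset.sum_congr rfl fun m _ => ?_
    rw [integral_finsetSum]
    · refine Finset.sum_congr rfl fun n _ => ?_
      rw [integral_mul_const, integral_const_mul]
    · intro n _
      exact Continuous.integrableOn_Icc (by fun_prop)
  · intro m _
    exact Continuous.integrableOn_Icc (by fun_prop)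

lemma prolate_full {N : ℕ} (m n : Fin N) :
    prolate1D N (Icc (-(1/2)) (1/2)) m n = if m = n then 1 else 0 := by
  unfold prolate1D
  rw [integral_Icc_eq_integral_Ioc, ← intervalIntegral.integral_of_le (by norm_num)]
  split_ifs with h
  · subst h
    simp
    norm_num
  · have hmn : (((m : ℕ) : ℂ) - ((n : ℕ) : ℂ)) ≠ 0 := by
      rw [sub_ne_zero]
      intro h'
      exact h (Fin.ext (by exact_mod_cast h'))
    have hc : (2 * (Real.pi : ℂ) * Complex.I * (((m : ℕ) : ℂ) - ((n : ℕ) : ℂ))) ≠ 0 :=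
      mul_ne_zero Complex.two_pi_I_ne_zero hmn
    have := integral_exp_mul_complex (a := -(1/2)) (b := 1/2) hc
    have h2 : ∀ f : ℝ, 2 * (Real.pi : ℂ) * Complex.I * (f : ℂ) * (((m : ℕ) : ℂ) - ((n : ℕ) : ℂ))
       = 2 * (Real.pi : ℂ) * Complex.I * (((m : ℕ) : ℂ) - ((n : ℕ) : ℂ)) * f := fun f => by ring
    simp_rw [h2]
    rw [this, div_eq_zero_iff]
    left
    rw [sub_eq_zero, Complex.exp_eq_exp_iff_exists_int]
    refine ⟨(m : ℤ) - n, ?_⟩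
    push_cast
    ring

lemma qP_full {N : ℕ} (x : Fin N → ℂ) : qP (Icc (-(1/2)) (1/2)) x = ∑ n, ‖x n‖ ^ 2 := by
  have h := quadP (-(1/2)) (1/2) x
  have h2 : ∑ m, ∑ n, (starRingEnd ℂ) (x m) * prolate1D N (Icc (-(1/2)) (1/2)) m n * x n
      = ((∑ n, ‖x n‖ ^ 2 : ℝ) : ℂ) := by
    push_cast
    refine Finset.sum_congr rfl fun m _ => ?_
    simp only [prolate_full]
    simp [Complex.conj_mul']
  rw [h2] at h
  exact_mod_cast h.symm

lemma qP_nonneg {N : ℕ} (E : Set ℝ) (x : Fin N → ℂ) : 0 ≤ qP E x :=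
  integral_nonneg fun _ => by positivity

lemma qP_int {N : ℕ} (a b : ℝ) (x : Fin N → ℂ) :
    IntegrableOn (fun f => ‖dftP x f‖ ^ 2) (Icc a b) :=
  Continuous.integrableOn_Icc (by have := dftP_cont x; fun_prop)

lemma qP_le_full {N : ℕ} (W : ℝ) (hW : W ≤ 1 / 2) (x : Fin N → ℂ) :
    qP (Icc (-W) W) x ≤ ∑ n, ‖x n‖ ^ 2 := by
  rw [← qP_full]
  exact setIntegral_mono_set (qP_int _ _ _) (Filter.Eventually.of_forall fun _ => by positivity)
    (Icc_subset_Icc (by linarith) hW).eventuallyLE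

/-- out-of-band energy bound -/
lemma qP_out {N : ℕ} (W : ℝ) (hW0 : 0 ≤ W) (hW : W ≤ 1 / 2) (x : Fin N → ℂ) (K : ℝ) (hK : 0 ≤ K)
    (h : ∀ f : ℝ, W ≤ |f| → |f| ≤ 1 / 2 → ‖dftP x f‖ ^ 2 ≤ K) :
    ∑ n, ‖x n‖ ^ 2 - qP (Icc (-W) W) x ≤ K := by
  rw [← qP_full]
  unfold qP
  rw [← setIntegral_sdiff measurableSet_Icc (qP_int _ _ _) (Icc_subset_Icc (by linarith) hW)]
  have hfin : volume (Icc (-(1/2) : ℝ) (1/2) \ Icc (-W) W) < ⊤ :=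
    (measure_mono sdiff_subset).trans_lt (by simp)
  calc _ ≤ ∫ f in (Icc (-(1/2) : ℝ) (1/2) \ Icc (-W) W), K := by
        refine setIntegral_mono_on ((qP_int _ _ _).mono_set sdiff_subset)
          (integrableOn_const hfin.ne) (measurableSet_Icc.diff measurableSet_Icc) ?_
        rintro f ⟨hf1, hf2⟩
        refine h f ?_ (abs_le.2 hf1)
        by_contra hlt
        exact hf2 (abs_le.1 (not_le.1 hlt).le)
    _ ≤ ∫ f in (Icc (-(1/2) : ℝ) (1/2)), K := by
        refine setIntegral_mono_set (integrableOn_const (by simp))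
          (Filter.Eventually.of_forall fun _ => hK) sdiff_subset.eventuallyLE
    _ = K := by
        simp
        norm_num

lemma spectralP {N : ℕ} (W : ℝ) (hA : (prolate1D N (Icc (-W) W)).IsHermitian)
    (g : EuclideanSpace ℂ (Fin N)) :
    ∑ i, hA.eigenvalues i * ‖inner ℂ (hA.eigenvectorBasis i) g‖ ^ 2 = qP (Icc (-W) W) g.ofLp := by
  have h := quadP (-W) W g.ofLp
  set A := prolate1D N (Icc (-W) W) with hAdef
  set b := hA.eigenvectorBasis
  have key : ∀ i, inner ℂ (b i) (WithLp.toLp 2 (A *ᵥ g.ofLp)) =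
      (hA.eigenvalues i : ℂ) * inner ℂ (b i) g := by
    intro i
    rw [EuclideanSpace.inner_eq_star_dotProduct, EuclideanSpace.inner_eq_star_dotProduct,
      dotProduct_comm, dotProduct_mulVec, dotProduct_comm g.ofLp]
    have : star (b i).ofLp ᵥ* A = (hA.eigenvalues i : ℂ) • star (b i).ofLp := by
      have h1 := hA.mulVec_eigenvectorBasis i
      have h2 := star_mulVec A (b i).ofLp
      rw [hA.eq] at h2
      rw [← h2, h1]
      ext j
      simp
      exact Or.inl rfl
    simp only [this, smul_dotProduct, smul_eq_mul]
  have h3 : inner ℂ g (WithLp.toLp 2 (A *ᵥ g.ofLp)) =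
      ∑ m, ∑ n, (starRingEnd ℂ) (g.ofLp m) * A m n * g.ofLp n := by
    rw [PiLp.inner_apply]
    refine Finset.sum_congr rfl fun m _ => ?_
    simp only [RCLike.inner_apply, mulVec, dotProduct, Finset.sum_mul]
    refine Finset.sum_congr rfl fun n _ => ?_
    ring
  rw [← h3, ← b.sum_inner_mul_inner] at h
  rw [← Complex.ofReal_inj, ← h]
  push_cast
  refine Finset.sum_congr rfl fun i _ => ?_
  rw [key i, ← Complex.conj_mul', inner_conj_symm]
  ring

/-- Binomial window, unit norm. -/
noncomputable def winP (M k : ℕ) : ℝ := (M.choose k : ℝ) / √(M.centralBinom : ℝ)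

/-- Shifted window. -/
noncomputable def swinP (M t n : ℕ) : ℝ := if t ≤ n then winP M (n - t) else 0

lemma shift_sum {R : Type*} [AddCommMonoid R] (N M t : ℕ) (h : t + M < N) (G : ℕ → R)
    (hG : ∀ k, M < k → G k = 0) :
    ∑ n : Fin N, (if t ≤ (n : ℕ) then G (n - t) else 0) = ∑ k ∈ Finset.range (M + 1), G k := by
  rw [Fin.sum_univ_eq_sum_range (fun n => if t ≤ n then G (n - t) else 0) N]
  obtain ⟨d, rfl⟩ : ∃ d, N = t + (M + 1) + d := ⟨N - (t + (M+1)), by omega⟩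
  rw [Finset.sum_range_add, Finset.sum_range_add]
  rw [Finset.sum_eq_zero (s := Finset.range t), Finset.sum_eq_zero (s := Finset.range d)]
  · simp
  · intro k _
    rw [if_pos (by omega)]
    exact hG _ (by omega)
  · intro k hk
    rw [if_neg]
    have := Finset.mem_range.1 hk
    omega

lemma winP_zero {M k : ℕ} (h : M < k) : winP M k = 0 := by
  simp [winP, Nat.choose_eq_zero_of_lt h]

lemma cb_pos (M : ℕ) : (0 : ℝ) < (M.centralBinom : ℝ) := by exact_mod_cast M.centralBinom_pos

lemma winP_sq (M : ℕ) : ∑ k ∈ Finset.range (M + 1), winP M k ^ 2 = 1 := by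
  simp only [winP, div_pow, Real.sq_sqrt (cb_pos M).le]
  rw [← Finset.sum_div, div_eq_one_iff_eq (cb_pos M).ne']
  have := Nat.sum_range_choose_sq M
  rw [Nat.centralBinom]
  exact_mod_cast this

lemma swin_sq (N M t : ℕ) (h : t + M < N) : ∑ n : Fin N, swinP M t n ^ 2 = 1 := by
  rw [← winP_sq M, ← shift_sum N M t h (fun k => winP M k ^ 2)]
  · refine Finset.sum_congr rfl fun n _ => ?_
    unfold swinP
    split_ifs <;> simp
  · intro k hk
    simp [winP_zero hk]

lemma swin_sq_t (M n T : ℕ) : ∑ t ∈ Finset.range T, swinP M t n ^ 2 ≤ 1 := by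
  rw [← winP_sq M]
  have h0 : ∀ k, 0 ≤ winP M k ^ 2 := fun k => sq_nonneg _
  have h1 : ∑ t ∈ Finset.range T, swinP M t n ^ 2 ≤
      ∑ t ∈ Finset.range (n + 1), winP M (n - t) ^ 2 := by
    calc _ ≤ ∑ t ∈ (Finset.range T).filter (fun t => t ≤ n), winP M (n - t) ^ 2 := by
          rw [Finset.sum_filter]
          refine Finset.sum_le_sum fun t _ => ?_
          unfold swinP
          split_ifs <;> simp
      _ ≤ _ := by
          refine Finset.sum_le_sum_of_subset_of_nonneg ?_ fun _ _ _ => h0 _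
          intro t ht
          simp at ht ⊢
          omega
  refine h1.trans ?_
  have h2 := Finset.sum_range_reflect (fun k => winP M k ^ 2) (n + 1)
  simp only [Nat.add_sub_cancel] at h2
  rw [h2]
  calc _ ≤ ∑ k ∈ (Finset.range (n+1)).filter (fun k => k ≤ M), winP M k ^ 2 := by
        rw [Finset.sum_filter]
        refine Finset.sum_le_sum fun k _ => ?_
        split_ifs with h
        · rfl
        · simp [winP_zero (not_le.1 h)]
    _ ≤ _ := by
        refine Finset.sum_le_sum_of_subset_of_nonneg ?_ fun _ _ _ => h0 _
        intro k hk
        simp at hk ⊢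
        omega

/-- wave packet -/
noncomputable def gP (N M t : ℕ) (f : ℝ) : EuclideanSpace ℂ (Fin N) :=
  WithLp.toLp 2 fun n => (swinP M t n : ℂ) *
    Complex.exp (2 * (Real.pi : ℂ) * Complex.I * (f : ℂ) * ((n : ℕ) : ℂ))

lemma norm_e (f : ℝ) (n : ℕ) :
    ‖Complex.exp (2 * (Real.pi : ℂ) * Complex.I * (f : ℂ) * (n : ℂ))‖ = 1 := by
  have := Complex.norm_exp_ofReal_mul_I (2 * π * f * n)
  rw [← this]
  congr 2
  push_cast
  ring

lemma gP_sq (N M t : ℕ) (h : t + M < N) (f : ℝ) : ∑ n, ‖(gP N M t f).ofLp n‖ ^ 2 = 1 := by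
  rw [← swin_sq N M t h]
  refine Finset.sum_congr rfl fun n _ => ?_
  simp only [gP]
  rw [norm_mul, norm_e]
  simp

lemma gP_inner (N M t : ℕ) (f : ℝ) (x : EuclideanSpace ℂ (Fin N)) :
    ‖inner ℂ x (gP N M t f)‖ = ‖dftP (fun n : Fin N => (swinP M t n : ℂ) * x.ofLp n) f‖ := by
  rw [← RCLike.norm_conj (dftP _ f)]
  congr 1
  rw [PiLp.inner_apply, dftP, map_sum]
  refine Finset.sum_congr rfl fun n _ => ?_
  rw [map_mul, conj_exp_aux]
  simp only [RCLike.inner_apply, gP, map_mul, Complex.conj_ofReal]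
  ring

lemma gP_dft (N M t : ℕ) (h : t + M < N) (f u : ℝ) :
    ‖dftP (gP N M t f).ofLp u‖ ^ 2 =
      (2 + 2 * Real.cos (2 * π * (f - u))) ^ M / (M.centralBinom : ℝ) := by
  set w : ℂ := Complex.exp ((2 * π * (f - u) : ℝ) * Complex.I) with hw
  have hwn : ∀ n : ℕ, w ^ n = Complex.exp (-(2 * (Real.pi : ℂ) * Complex.I * (u : ℂ) * (n : ℂ))) *
     Complex.exp (2 * (Real.pi : ℂ) * Complex.I * (f : ℂ) * (n : ℂ)) := by
    intro n
    rw [hw, ← Complex.exp_nat_mul, ← Complex.exp_add]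
    congr 1
    push_cast
    ring
  have h1 : dftP (gP N M t f).ofLp u = w ^ t * (1 + w) ^ M / (√(M.centralBinom : ℝ) : ℝ) := by
    have h2 := shift_sum N M t h (fun k => (winP M k : ℂ) * w ^ (t + k))
      (fun k hk => by simp [winP_zero hk])
    have h3 : dftP (gP N M t f).ofLp u = ∑ k ∈ Finset.range (M + 1), (winP M k : ℂ) * w ^ (t + k) := by
      rw [← h2, dftP]
      refine Finset.sum_congr rfl fun n _ => ?_
      simp only [gP, swinP]
      split_ifs with hn
      · rw [Nat.add_sub_cancel' hn, hwn]
        ring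
      · simp
    rw [h3, add_comm 1 w, add_pow, Finset.mul_sum, Finset.sum_div]
    refine Finset.sum_congr rfl fun k _ => ?_
    simp only [winP]
    push_cast
    rw [pow_add]
    ring
  have hw1 : ‖w‖ = 1 := Complex.norm_exp_ofReal_mul_I _
  have hw2 : ‖1 + w‖ ^ 2 = 2 + 2 * Real.cos (2 * π * (f - u)) := by
    rw [← Complex.normSq_eq_norm_sq, Complex.normSq_apply, hw]
    simp only [Complex.add_re, Complex.one_re, Complex.exp_ofReal_mul_I_re, Complex.add_im,
      Complex.one_im, Complex.exp_ofReal_mul_I_im]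
    nlinarith [Real.sin_sq_add_cos_sq (2 * π * (f - u))]
  rw [h1, norm_div, norm_mul, norm_pow, norm_pow, hw1, one_pow, one_mul, div_pow, ← pow_mul,
    mul_comm M 2, pow_mul, hw2, Complex.norm_real, Real.norm_eq_abs, sq_abs,
    Real.sq_sqrt (cb_pos M).le]

lemma cos_bd (δ x : ℝ) (hδ : 0 ≤ δ) (h1 : δ ≤ |x|) (h2 : |x| ≤ 1 - δ) :
    Real.cos (2 * π * x) ≤ Real.cos (2 * π * δ) := by
  have hp := Real.pi_pos
  have : Real.cos (2 * π * x) = Real.cos (2 * π * |x|) := by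
    rw [← Real.cos_abs, abs_mul, abs_of_pos (by positivity)]
  rw [this]
  rcases le_total |x| (1/2) with h | h
  · exact Real.cos_le_cos_of_nonneg_of_le_pi (by positivity) (by nlinarith)
      (by nlinarith)
  · rw [← Real.cos_two_pi_sub]
    exact Real.cos_le_cos_of_nonneg_of_le_pi (by positivity) (by nlinarith) (by nlinarith)

lemma gP_out (N M t : ℕ) (h : t + M < N) (hM : 0 < M) (W δ f : ℝ) (hδ : 0 ≤ δ) (hδW : δ ≤ W)
    (hW : W ≤ 1 / 2)
    (hf : |f| ≤ W - δ) :
    1 - qP (Icc (-W) W) (gP N M t f).ofLp ≤ 2 * M * ((1 + Real.cos (2 * π * δ)) / 2) ^ M := by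
  have hr : 0 ≤ (1 + Real.cos (2 * π * δ)) / 2 := by linarith [Real.neg_one_le_cos (2 * π * δ)]
  have hone := gP_sq N M t h f
  refine (sub_le_sub_right hone.symm.le _).trans ?_
  refine qP_out W (hδ.trans hδW) hW _ _ (by positivity) ?_
  intro u hu1 hu2
  rw [gP_dft N M t h]
  have hc : Real.cos (2 * π * (f - u)) ≤ Real.cos (2 * π * δ) := by
    apply cos_bd _ _ hδ
    · have := abs_sub_abs_le_abs_sub u f
      rw [abs_sub_comm]
      linarith
    · have := abs_sub f u
      linarith
  rw [div_le_iff₀ (cb_pos M)]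
  have h4 : (4 : ℝ) ^ M ≤ 2 * M * M.centralBinom := by
    exact_mod_cast Nat.four_pow_le_two_mul_self_mul_centralBinom M hM
  calc (2 + 2 * Real.cos (2 * π * (f - u))) ^ M ≤ (4 * ((1 + Real.cos (2 * π * δ)) / 2)) ^ M := by
        apply pow_le_pow_left₀
        · linarith [Real.neg_one_le_cos (2 * π * (f - u))]
        · linarith
    _ = 4 ^ M * ((1 + Real.cos (2 * π * δ)) / 2) ^ M := mul_pow _ _ _
    _ ≤ (2 * M * M.centralBinom) * ((1 + Real.cos (2 * π * δ)) / 2) ^ M := by gcongr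
    _ = _ := by ring

/-- The main finite estimate. -/
lemma mainP (N M : ℕ) (hM : 0 < M) (W δ : ℝ) (hδ : 0 ≤ δ) (hδW : δ ≤ W) (hW : W ≤ 1 / 2)
    (hA : (prolate1D N (Icc (-W) W)).IsHermitian) (μ : Fin N → ℝ) (hμ : Antitone μ)
    (σ : Equiv.Perm (Fin N)) (hσ : hA.eigenvalues = μ ∘ σ) (l : Fin N)
    (hl : (l : ℝ) + 1 ≤ (N - M : ℕ) * (2 * (W - δ))) :
    1 - μ l ≤ N * (2 * M * ((1 + Real.cos (2 * π * δ)) / 2) ^ M) := by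
  set r := (1 + Real.cos (2 * π * δ)) / 2 with hrdef
  have hr : 0 ≤ r := by rw [hrdef]; linarith [Real.neg_one_le_cos (2 * π * δ)]
  set b := hA.eigenvectorBasis
  have hT : ∀ t ∈ Finset.range (N - M), t + M < N := by
    intro t ht
    have := Finset.mem_range.1 ht
    omega
  set a : Fin N → ℝ := fun i => ∑ t ∈ Finset.range (N - M),
    qP (Icc (-(W - δ)) (W - δ)) (fun n : Fin N => (swinP M t n : ℂ) * (b i).ofLp n) with ha
  have ha' : ∀ i, a i = ∑ t ∈ Finset.range (N - M), ∫ f in Icc (-(W - δ)) (W - δ),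
      ‖inner ℂ (b i) (gP N M t f)‖ ^ 2 := by
    intro i
    simp only [ha, qP, gP_inner]
  have hint : ∀ i t, IntegrableOn (fun f => ‖inner ℂ (b i) (gP N M t f)‖ ^ 2)
      (Icc (-(W - δ)) (W - δ)) := by
    intro i t
    simp only [gP_inner]
    exact qP_int _ _ _
  have hnb : ∀ i, ∑ n, ‖(b i).ofLp n‖ ^ 2 = 1 := by
    intro i
    rw [← EuclideanSpace.norm_sq_eq, b.norm_eq_one, one_pow]
  have ha0 : ∀ i, 0 ≤ a i := fun i => Finset.sum_nonneg fun t _ => qP_nonneg _ _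
  have ha1 : ∀ i, a i ≤ 1 := by
    intro i
    calc a i ≤ ∑ t ∈ Finset.range (N - M), ∑ n : Fin N, ‖(swinP M t n : ℂ) * (b i).ofLp n‖ ^ 2 :=
          Finset.sum_le_sum fun t _ => qP_le_full _ (by linarith) _
      _ = ∑ n : Fin N, (∑ t ∈ Finset.range (N - M), swinP M t n ^ 2) * ‖(b i).ofLp n‖ ^ 2 := by
          rw [Finset.sum_comm]
          refine Finset.sum_congr rfl fun n _ => ?_
          rw [Finset.sum_mul]
          refine Finset.sum_congr rfl fun t _ => ?_
          rw [norm_mul, mul_pow, Complex.norm_real, Real.norm_eq_abs, sq_abs]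
      _ ≤ ∑ n : Fin N, 1 * ‖(b i).ofLp n‖ ^ 2 := by
          refine Finset.sum_le_sum fun n _ => ?_
          exact mul_le_mul_of_nonneg_right (swin_sq_t _ _ _) (by positivity)
      _ = 1 := by simp only [one_mul, hnb]
  have hpars : ∀ g : EuclideanSpace ℂ (Fin N), ∑ i, ‖inner ℂ (b i) g‖ ^ 2 = ∑ n, ‖g.ofLp n‖ ^ 2 := by
    intro g
    rw [b.sum_sq_norm_inner_right, EuclideanSpace.norm_sq_eq]
  have hsum : ∑ i, a i = (N - M : ℕ) * (2 * (W - δ)) := by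
    simp only [ha']
    rw [Finset.sum_comm]
    have : ∀ t ∈ Finset.range (N - M), ∑ i, ∫ f in Icc (-(W - δ)) (W - δ),
        ‖inner ℂ (b i) (gP N M t f)‖ ^ 2 = 2 * (W - δ) := by
      intro t ht
      rw [← integral_finsetSum _ (fun i _ => hint i t)]
      simp only [hpars, gP_sq N M t (hT t ht)]
      simp
      rw [max_eq_left] <;> linarith
    rw [Finset.sum_congr rfl this]
    simp
  have hlam : ∀ i, 0 ≤ 1 - hA.eigenvalues i := by
    intro i
    have h1 := spectralP W hA (b i)
    have h2 := qP_le_full W hW (b i).ofLp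
    rw [← h1, hnb] at h2
    have h3 : ∑ j, hA.eigenvalues j * ‖inner ℂ (hA.eigenvectorBasis j) (b i)‖ ^ 2
        = hA.eigenvalues i := by
      rw [Finset.sum_eq_single i]
      · rw [show inner ℂ (hA.eigenvectorBasis i) (b i) = 1 by
          rw [← b.inner_eq_one i]]
        simp
      · intro j _ hj
        rw [show inner ℂ (hA.eigenvectorBasis j) (b i) = 0 from b.inner_eq_zero hj]
        simp
      · simp
    linarith
  have hweighted : ∑ i, (1 - hA.eigenvalues i) * a i ≤ N * (2 * M * r ^ M) := by
    have hK : 0 ≤ 2 * M * r ^ M := by positivity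
    have : ∀ t ∈ Finset.range (N - M), ∑ i, (1 - hA.eigenvalues i) *
        ∫ f in Icc (-(W - δ)) (W - δ), ‖inner ℂ (b i) (gP N M t f)‖ ^ 2 ≤ 2 * M * r ^ M := by
      intro t ht
      simp only [← integral_const_mul]
      rw [← integral_finsetSum _ (fun i _ => (hint i t).const_mul _)]
      have hpt : ∀ f ∈ Icc (-(W - δ)) (W - δ), ∑ i, (1 - hA.eigenvalues i) *
          ‖inner ℂ (b i) (gP N M t f)‖ ^ 2 ≤ 2 * M * r ^ M := by
        intro f hf
        simp only [sub_mul, one_mul]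
        rw [Finset.sum_sub_distrib, hpars, spectralP, gP_sq N M t (hT t ht)]
        exact gP_out N M t (hT t ht) hM W δ f hδ hδW hW (abs_le.2 hf)
      calc _ ≤ ∫ f in Icc (-(W - δ)) (W - δ), 2 * M * r ^ M := by
            refine setIntegral_mono_on ?_ (integrableOn_const (by simp)) measurableSet_Icc hpt
            exact integrable_finsetSum _ (fun i _ => (hint i t).const_mul _)
        _ ≤ 1 * (2 * M * r ^ M) := by
            rw [setIntegral_const, smul_eq_mul]
            refine mul_le_mul_of_nonneg_right ?_ hK
            simp
            linarith
        _ = _ := one_mul _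
    simp only [ha', Finset.mul_sum]
    rw [Finset.sum_comm]
    refine (Finset.sum_le_sum this).trans ?_
    simp only [Finset.sum_const, Finset.card_range, nsmul_eq_mul]
    refine mul_le_mul_of_nonneg_right ?_ hK
    exact_mod_cast Nat.sub_le _ _
  -- reindex
  set a' : Fin N → ℝ := fun j => a (σ.symm j) with ha'def
  have hs' : ∑ j, a' j = ∑ i, a i := Equiv.sum_comp σ.symm a
  have hw' : ∑ j, (1 - μ j) * a' j = ∑ i, (1 - hA.eigenvalues i) * a i := by
    rw [← Equiv.sum_comp σ.symm (fun i => (1 - hA.eigenvalues i) * a i)]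
    simp [hσ, ha'def]
  have hmu : ∀ j, 0 ≤ 1 - μ j := by
    intro j
    have := hlam (σ.symm j)
    simpa [hσ] using this
  have hsplit := Finset.sum_filter_add_sum_filter_not Finset.univ (fun j : Fin N => j < l) a'
  have hlow : ∑ j ∈ Finset.univ.filter (fun j : Fin N => j < l), a' j ≤ l := by
    calc _ ≤ ∑ j ∈ Finset.univ.filter (fun j : Fin N => j < l), (1 : ℝ) :=
          Finset.sum_le_sum fun j _ => ha1 _
      _ = l := by
          have : Finset.univ.filter (fun j : Fin N => j < l) = Finset.Iio l := by ext; simp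
          rw [this]
          simp
  have hhigh : 1 ≤ ∑ j ∈ Finset.univ.filter (fun j : Fin N => ¬ j < l), a' j := by
    linarith
  calc 1 - μ l ≤ (1 - μ l) * ∑ j ∈ Finset.univ.filter (fun j : Fin N => ¬ j < l), a' j :=
        le_mul_of_one_le_right (hmu l) hhigh
    _ ≤ ∑ j ∈ Finset.univ.filter (fun j : Fin N => ¬ j < l), (1 - μ j) * a' j := by
        rw [Finset.mul_sum]
        refine Finset.sum_le_sum fun j hj => ?_
        have hj' : l ≤ j := not_lt.1 (Finset.mem_filter.1 hj).2
        exact mul_le_mul_of_nonneg_right (by linarith [hμ hj']) (ha0 _)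
    _ ≤ ∑ j, (1 - μ j) * a' j :=
        Finset.sum_le_sum_of_subset_of_nonneg (Finset.filter_subset _ _)
          fun j _ _ => mul_nonneg (hmu j) (ha0 _)
    _ ≤ _ := hw'.trans_le hweighted

theorem dpss_eigenvalue_cluster_near_one
    (W : ℝ) (hW : W ∈ Set.Ioo (0 : ℝ) (1 / 2)) (ε : ℝ) (hε : ε ∈ Set.Ioo (0 : ℝ) 1) :
    ∃ (C₁ C₂ : ℝ) (N₁ : ℕ), 0 < C₁ ∧ 0 < C₂ ∧ 1 ≤ N₁ ∧
      ∀ (N : ℕ), N₁ ≤ N →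
        ∀ (hA : (prolate1D N (Set.Icc (-W) W)).IsHermitian) (μ : Fin N → ℝ),
          Antitone μ →
          (∃ σ : Equiv.Perm (Fin N), hA.eigenvalues = μ ∘ σ) →
          ∀ l : Fin N, (l : ℕ) ≤ ⌊2 * (N : ℝ) * W * (1 - ε)⌋₊ →
            1 - μ l ≤ C₁ * Real.exp (-C₂ * (N : ℝ)) := by
  obtain ⟨hW0, hW1⟩ := hW
  obtain ⟨hε0, hε1⟩ := hε
  have hp := Real.pi_pos
  set δ := W * ε / 4 with hδ
  have hWε : 0 < W * ε := mul_pos hW0 hε0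
  have hWε1 : W * ε < W := by nlinarith
  set r := (1 + Real.cos (2 * π * δ)) / 2 with hr
  have hcos0 : 0 < Real.cos (2 * π * δ) := by
    apply Real.cos_pos_of_mem_Ioo
    constructor
    · have : 0 < 2 * π * δ := by positivity
      linarith
    · have : δ < 1 / 8 := by rw [hδ]; linarith
      nlinarith
  have hcos1 : Real.cos (2 * π * δ) < 1 := by
    rw [← Real.cos_zero]
    apply Real.cos_lt_cos_of_nonneg_of_le_pi le_rfl
    · have : δ < 1 / 8 := by rw [hδ]; linarith
      nlinarith
    · positivity
  have hr0 : 0 < r := by rw [hr]; linarith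
  have hr1 : r < 1 := by rw [hr]; linarith
  set c := -Real.log r with hc
  have hc0 : 0 < c := by rw [hc]; linarith [Real.log_neg hr0 hr1]
  have hrc : r = Real.exp (-c) := by rw [hc, neg_neg, Real.exp_log hr0]
  set d := c * ε / 8 with hd
  have hd0 : 0 < d := by positivity
  refine ⟨4 * Real.exp c / d ^ 2, d, ⌈4 / (W * ε)⌉₊ + 1, by positivity, hd0, by omega, ?_⟩
  intro N hN hA μ hμ ⟨σ, hσ⟩ l hl
  have hNbig : 4 ≤ N * (W * ε) := by
    have h1 := Nat.le_ceil (4 / (W * ε))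
    have h2 : ((⌈4 / (W * ε)⌉₊ + 1 : ℕ) : ℝ) ≤ N := by exact_mod_cast hN
    push_cast at h2
    rw [← div_le_iff₀ hWε]
    linarith
  have hN0 : (0 : ℝ) ≤ N := Nat.cast_nonneg N
  have hNε : 4 ≤ N * ε := by
    have : (N : ℝ) * (W * ε) ≤ N * ε := by
      apply mul_le_mul_of_nonneg_left _ hN0
      nlinarith
    linarith
  set M := ⌊(N : ℝ) * ε / 4⌋₊ with hM
  have hM0 : 0 < M := Nat.floor_pos.2 (by linarith)
  have hMle : (M : ℝ) ≤ N * ε / 4 := Nat.floor_le (by positivity)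
  have hMge : N * ε / 4 - 1 ≤ (M : ℝ) := by
    have := Nat.lt_floor_add_one ((N : ℝ) * ε / 4)
    linarith
  have hMN' : (M : ℝ) ≤ N := by nlinarith
  have hMN : M ≤ N := by exact_mod_cast hMN'
  have hl' : (l : ℝ) ≤ 2 * N * W * (1 - ε) := by
    have h1 : 0 ≤ 2 * (N : ℝ) * W * (1 - ε) := by
      have : 0 ≤ 1 - ε := by linarith
      positivity
    calc (l : ℝ) ≤ (⌊2 * (N : ℝ) * W * (1 - ε)⌋₊ : ℝ) := by exact_mod_cast hl
      _ ≤ _ := Nat.floor_le h1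
  have hmain := mainP N M hM0 W δ (by positivity) (by rw [hδ]; linarith) hW1.le hA μ hμ σ hσ l (by
    rw [Nat.cast_sub hMN]
    have h1 : (N * (1 - ε / 4)) * (2 * (W - δ)) ≤ (N - M : ℝ) * (2 * (W - δ)) := by
      apply mul_le_mul_of_nonneg_right
      · linarith
      · rw [hδ]; linarith
    have h2 : (N * (1 - ε / 4)) * (2 * (W - δ)) =
        2 * N * W * (1 - ε) + N * (W * ε) + N * (W * ε) * ε / 8 := by
      rw [hδ]; ring
    have h3 : 0 ≤ N * (W * ε) * ε / 8 := by positivity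
    linarith)
  refine hmain.trans ?_
  have e1 : r ^ M ≤ Real.exp c * (Real.exp (-d * N) * Real.exp (-d * N)) := by
    rw [hrc, ← Real.exp_nat_mul, ← Real.exp_add, ← Real.exp_add]
    apply Real.exp_le_exp.2
    have : d * 8 = c * ε := by rw [hd]; ring
    nlinarith
  have e2 : (N : ℝ) ^ 2 * Real.exp (-d * N) ≤ 2 / d ^ 2 := by
    have h1 := Real.quadratic_le_exp_of_nonneg (x := d * N) (by positivity)
    have h2 : (d * N) ^ 2 / 2 ≤ Real.exp (d * N) := by
      have : 0 ≤ d * N := by positivity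
      linarith
    rw [neg_mul, Real.exp_neg, ← div_eq_mul_inv, div_le_div_iff₀ (Real.exp_pos _) (by positivity)]
    nlinarith
  calc (N : ℝ) * (2 * M * r ^ M) ≤ N * (2 * N * (Real.exp c * (Real.exp (-d * N) * Real.exp (-d * N)))) := by
        gcongr
    _ = 2 * Real.exp c * ((N : ℝ) ^ 2 * Real.exp (-d * N)) * Real.exp (-d * N) := by ring
    _ ≤ 2 * Real.exp c * (2 / d ^ 2) * Real.exp (-d * N) := by gcongr
    _ = _ := by ring
end

section
/- Fix a half-bandwidth W ∈ (0, 1/2) and ε ∈ (0, 1/(2W) − 1). Then there exist constants C₃ > 0, C₄ > 0 and an integer N₂ ≥ 1 (all depending only on W and ε) such that for every N ≥ N₂ and every index l with ⌈2NW(1+ε)⌉ ≤ l ≤ N−1, the l-th eigenvalue satisfies λ_{N,W}^{(l)} ≤ C₃·e^{−C₄·N}. -/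
open MeasureTheory Matrix Real Set

lemma minmax_aux {N : ℕ} (A : Matrix (Fin N) (Fin N) ℂ) (hA : A.IsHermitian) (μ : Fin N → ℝ)
    (hμ : Antitone μ) (σ : Equiv.Perm (Fin N)) (hσ : hA.eigenvalues = μ ∘ σ) (l : Fin N)
    (K : Finset ℂ) (hK : K.card ≤ (l : ℕ)) :
    ∃ v : Fin N → ℂ, v ≠ 0 ∧ (∀ ζ ∈ K, ∑ n, v n * ζ ^ (n : ℕ) = 0) ∧
      μ l * ∑ n, ‖v n‖ ^ 2 ≤ (star v ⬝ᵥ A *ᵥ v).re := by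
  classical
  set U : Matrix (Fin N) (Fin N) ℂ := (hA.eigenvectorUnitary).1 with hU
  have hUU : U * star U = 1 := Unitary.coe_mul_star_self hA.eigenvectorUnitary
  have hAe : A = U * diagonal (fun i => ((hA.eigenvalues i : ℝ) : ℂ)) * star U := by
    have := hA.spectral_theorem
    rw [Unitary.conjStarAlgAut_apply] at this
    exact this
  let P : Matrix {i : Fin N // l < σ i} (Fin N) ℂ := fun i n => (star U) i n
  let Q : Matrix K (Fin N) ℂ := fun ζ n => (ζ : ℂ) ^ (n : ℕ)
  let f : (Fin N → ℂ) →ₗ[ℂ] (({i : Fin N // l < σ i} → ℂ) × (K → ℂ)) :=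
    P.mulVecLin.prod Q.mulVecLin
  have hcard : Fintype.card {i : Fin N // l < σ i} = N - 1 - l := by
    rw [Fintype.card_congr (σ.subtypeEquiv (q := fun j => l < j) (fun a => Iff.rfl))]
    rw [Fintype.card_subtype]
    simp [Fin.card_Ioi, Finset.filter_lt_eq_Ioi]
  have hker : LinearMap.ker f ≠ ⊥ := by
    apply LinearMap.ker_ne_bot_of_finrank_lt
    rw [Module.finrank_prod, Module.finrank_fintype_fun_eq_card, Module.finrank_fintype_fun_eq_card,
      Module.finrank_fintype_fun_eq_card, hcard, Fintype.card_coe, Fintype.card_fin]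
    have := l.isLt
    omega
  obtain ⟨v, hv, hv0⟩ := Submodule.exists_mem_ne_zero_of_ne_bot hker
  have hv' : P *ᵥ v = 0 ∧ Q *ᵥ v = 0 := by
    have : f v = 0 := hv
    exact Prod.mk_inj.1 this
  refine ⟨v, hv0, ?_, ?_⟩
  · intro ζ hζ
    have := congrFun hv'.2 ⟨ζ, hζ⟩
    simpa [Q, mulVec, dotProduct, mul_comm] using this
  · set c : Fin N → ℂ := star U *ᵥ v with hc
    have hc0 : ∀ i, l < σ i → c i = 0 := fun i hi => congrFun hv'.1 ⟨i, hi⟩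
    have hsc : star v ᵥ* U = star c := by
      rw [hc, star_mulVec, star_eq_conjTranspose, conjTranspose_conjTranspose]
    have h1 : star v ⬝ᵥ A *ᵥ v = ∑ i, ((hA.eigenvalues i * ‖c i‖ ^ 2 : ℝ) : ℂ) := by
      have hAv : A *ᵥ v = (U * diagonal (fun i => ((hA.eigenvalues i : ℝ) : ℂ)) * star U) *ᵥ v :=
        congrArg (· *ᵥ v) hAe
      rw [hAv, ← mulVec_mulVec, ← mulVec_mulVec, dotProduct_mulVec, hsc, ← hc]
      simp only [dotProduct, mulVec_diagonal]
      refine Finset.sum_congr rfl fun i _ => ?_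
      have : star (c i) * c i = ((‖c i‖ ^ 2 : ℝ) : ℂ) := by
        rw [Complex.star_def, Complex.conj_mul']; push_cast; rfl
      rw [Pi.star_apply, Complex.ofReal_mul, ← this]; ring
    have h2 : (((∑ n, ‖v n‖ ^ 2 : ℝ)) : ℂ) = ((∑ n, ‖c n‖ ^ 2 : ℝ) : ℂ) := by
      have e : ∀ w : Fin N → ℂ, (((∑ n, ‖w n‖ ^ 2 : ℝ)) : ℂ) = star w ⬝ᵥ w := by
        intro w
        simp only [dotProduct, Pi.star_apply, Complex.star_def, Complex.conj_mul']
        push_cast; rfl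
      rw [e, e]
      rw [← hsc, hc, ← dotProduct_mulVec, mulVec_mulVec, hUU, one_mulVec]
    rw [Complex.ofReal_inj.1 h2, h1, ← Complex.ofReal_sum, Complex.ofReal_re, Finset.mul_sum]
    refine Finset.sum_le_sum fun i _ => ?_
    by_cases hi : l < σ i
    · simp [hc0 i hi]
    · rw [hσ]
      exact mul_le_mul_of_nonneg_right (hμ (not_lt.1 hi)) (by positivity)

lemma factor_aux (M : ℕ) (hM : 0 < M) (K : Finset ℂ) (hK : ∀ ζ ∈ K, ζ ^ M = 1)
    (p : Polynomial ℂ) (hp : ∀ ζ ∈ K, p.eval ζ = 0) :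
    ∃ q S : Polynomial ℂ, (∀ z, S.eval z = 0 → z ^ M = 1 ∧ z ∉ K) ∧
      ∀ z, p.eval z * S.eval z = q.eval z * (z ^ M - 1) := by
  classical
  have key : ∀ r : Polynomial ℂ, (∀ ζ ∈ K, r.eval ζ = 0) →
      (∏ ζ ∈ K, (Polynomial.X - Polynomial.C ζ)) ∣ r := by
    intro r hr
    apply Finset.prod_dvd_of_coprime
    · intro a _ b _ hab
      exact Polynomial.pairwise_coprime_X_sub_C (s := id) Function.injective_id hab
    · intro ζ hζ
      exact Polynomial.dvd_iff_isRoot.2 (hr ζ hζ)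
  obtain ⟨q, hq⟩ := key p hp
  obtain ⟨S, hS⟩ := key (Polynomial.X ^ M - 1) (by intro ζ hζ; simp [hK ζ hζ])
  have hT : ∀ ζ ∈ K, (∏ ζ ∈ K, (Polynomial.X - Polynomial.C ζ)).eval ζ = 0 := by
    intro ζ hζ
    rw [Polynomial.eval_prod]
    exact Finset.prod_eq_zero hζ (by simp)
  set T := ∏ ζ ∈ K, (Polynomial.X - Polynomial.C ζ)
  have hev : ∀ z : ℂ, z ^ M - 1 = T.eval z * S.eval z := by
    intro z
    have := congrArg (Polynomial.eval z) hS
    simpa using this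
  refine ⟨q, S, ?_, ?_⟩
  · intro z hz
    have hz1 : z ^ M = 1 := by
      have := hev z
      rw [hz, mul_zero] at this
      exact sub_eq_zero.1 this
    refine ⟨hz1, fun hzK => ?_⟩
    have := congrArg (fun r => (Polynomial.derivative r).eval z) hS
    simp [hz, hT z hzK, Polynomial.derivative_X_pow] at this
    rcases this with h | h
    · omega
    · rw [h.1, zero_pow hM.ne'] at hz1
      exact zero_ne_one hz1
  · intro z
    rw [hev z, hq, Polynomial.eval_mul]; ring

/-- The point `exp(2πif)`. -/
noncomputable def zpt (f : ℂ) : ℂ := Complex.exp (2 * (Real.pi : ℂ) * Complex.I * f)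

lemma norm_zpt (f : ℂ) : ‖zpt f‖ = Real.exp (-(2 * Real.pi * f.im)) := by
  rw [zpt, Complex.norm_exp]
  congr 1
  simp

lemma zpt_pow (f : ℂ) (M : ℕ) :
    zpt f ^ M = Complex.exp (2 * (Real.pi : ℂ) * Complex.I * ((M : ℂ) * f)) := by
  rw [zpt, ← Complex.exp_nat_mul]
  congr 1
  ring

lemma norm_zpt_pow (f : ℂ) (M : ℕ) : ‖zpt f ^ M‖ = Real.exp (-(2 * Real.pi * M * f.im)) := by
  rw [norm_pow, norm_zpt, ← Real.exp_nat_mul]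
  congr 1
  ring

/-- The sampling nodes. -/
noncomputable def nodes (M L : ℕ) : Finset ℂ :=
  (Finset.Icc (-(L : ℤ)) L).image (fun k : ℤ => zpt ((k : ℂ) / (M : ℂ)))

lemma card_nodes (M L : ℕ) : (nodes M L).card ≤ 2 * L + 1 := by
  refine Finset.card_image_le.trans ?_
  rw [Int.card_Icc]
  omega

lemma nodes_pow (M L : ℕ) (hM : 0 < M) : ∀ ζ ∈ nodes M L, ζ ^ M = 1 := by
  intro ζ hζ
  obtain ⟨k, -, rfl⟩ := Finset.mem_image.1 hζ
  have : (M : ℂ) ≠ 0 := by exact_mod_cast hM.ne'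
  rw [zpt_pow, Complex.exp_eq_one_iff]
  exact ⟨k, by field_simp⟩

lemma mem_nodes (M L : ℕ) (hM : 0 < M) (f : ℂ) (hf : |f.re| ≤ ((L : ℝ) + 1 / 2) / M)
    (h : zpt f ^ M = 1) : zpt f ∈ nodes M L := by
  have hM' : (M : ℂ) ≠ 0 := by exact_mod_cast hM.ne'
  have hMr : (0 : ℝ) < M := by exact_mod_cast hM
  rw [zpt_pow, Complex.exp_eq_one_iff] at h
  obtain ⟨k, hk⟩ := h
  have hpi : (Real.pi : ℂ) ≠ 0 := by exact_mod_cast Real.pi_ne_zero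
  have hMf : (M : ℂ) * f = k := by
    have h2 : (2 * (Real.pi : ℂ) * Complex.I) ≠ 0 := by simp [hpi]
    apply mul_left_cancel₀ h2
    rw [hk]; ring
  have hff : f = (k : ℂ) / (M : ℂ) := by rw [← hMf]; field_simp
  have hre : f.re = (k : ℝ) / M := by
    rw [hff, show ((k : ℂ) / (M : ℂ)) = (((k : ℝ) / (M : ℝ) : ℝ) : ℂ) by push_cast; rfl,
      Complex.ofReal_re]
  rw [hre, abs_div, abs_of_pos hMr, div_le_div_iff_of_pos_right hMr] at hf
  refine Finset.mem_image.2 ⟨k, ?_, by rw [hff]⟩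
  have h1 := abs_le.1 hf
  rw [Finset.mem_Icc]
  constructor
  · have : ((-(L : ℤ) - 1 : ℤ) : ℝ) < (k : ℝ) := by push_cast; linarith
    have := Int.cast_lt.1 this
    omega
  · have : (k : ℝ) < (((L : ℤ) + 1 : ℤ) : ℝ) := by push_cast; linarith
    have := Int.cast_lt.1 this
    omega

/-- bound for the quotient, given a lower bound for the denominator -/
lemma quot_bound (p : Polynomial ℂ) (N M : ℕ) (A D : ℝ) (hA : 0 ≤ A) (hD : 0 < D)
    (hp1 : ∀ z, ‖z‖ ≤ 1 → ‖p.eval z‖ ≤ A) (hp2 : ∀ z, 1 ≤ ‖z‖ → ‖p.eval z‖ ≤ A * ‖z ^ N‖)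
    (f : ℂ) (h1 : 0 ≤ f.im → D ≤ ‖zpt f ^ M - 1‖)
    (h2 : f.im ≤ 0 → D * Real.exp (-(2 * Real.pi * M * f.im)) ≤ ‖zpt f ^ M - 1‖) :
    Real.exp (-(Real.pi * ((M : ℝ) - N) * f.im)) * (‖p.eval (zpt f)‖ / ‖zpt f ^ M - 1‖)
      ≤ A / D * Real.exp (-(Real.pi * ((M : ℝ) - N) * |f.im|)) := by
  rcases le_total 0 f.im with h | h
  · rw [abs_of_nonneg h, mul_comm]
    gcongr
    · apply hp1
      rw [norm_zpt, Real.exp_le_one_iff]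
      have := Real.pi_pos
      have : 0 ≤ 2 * Real.pi * f.im := by positivity
      linarith
    · exact h1 h
  · rw [abs_of_nonpos h]
    have e : ‖p.eval (zpt f)‖ ≤ A * Real.exp (-(2 * Real.pi * N * f.im)) := by
      rw [← norm_zpt_pow]
      apply hp2
      rw [norm_zpt, Real.one_le_exp_iff]
      have := Real.pi_pos
      have : 2 * Real.pi * f.im ≤ 0 := mul_nonpos_of_nonneg_of_nonpos (by positivity) h
      linarith
    calc _ ≤ Real.exp (-(Real.pi * ((M : ℝ) - N) * f.im)) *
          (A * Real.exp (-(2 * Real.pi * N * f.im)) / (D * Real.exp (-(2 * Real.pi * M * f.im)))) := by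
          gcongr
          exact h2 h
      _ = A / D * (Real.exp (-(Real.pi * ((M : ℝ) - N) * f.im)) *
          (Real.exp (-(2 * Real.pi * N * f.im)) / Real.exp (-(2 * Real.pi * M * f.im)))) := by
          field_simp
      _ = _ := by
          rw [← Real.exp_sub, ← Real.exp_add]
          congr 2
          ring

lemma lower_vert (M L : ℕ) (hM : 0 < M) (f : ℂ)
    (hf : f.re = ((L : ℝ) + 1 / 2) / M ∨ f.re = -(((L : ℝ) + 1 / 2) / M)) :
    ‖zpt f ^ M - 1‖ = Real.exp (-(2 * Real.pi * M * f.im)) + 1 := by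
  have hM' : (M : ℂ) ≠ 0 := by exact_mod_cast hM.ne'
  have h : ∃ k : ℤ, (M : ℂ) * f = (k : ℂ) + 1 / 2 + M * f.im * Complex.I := by
    rcases hf with hf | hf
    · refine ⟨L, ?_⟩
      conv_lhs => rw [← Complex.re_add_im f, hf]
      push_cast
      field_simp
    · refine ⟨-L - 1, ?_⟩
      conv_lhs => rw [← Complex.re_add_im f, hf]
      push_cast
      field_simp
      ring
  obtain ⟨k, hk⟩ := h
  have : zpt f ^ M = -((Real.exp (-(2 * Real.pi * M * f.im)) : ℝ) : ℂ) := by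
    rw [zpt_pow, hk]
    rw [show 2 * (Real.pi : ℂ) * Complex.I * ((k : ℂ) + 1 / 2 + M * f.im * Complex.I)
      = (k : ℂ) * (2 * Real.pi * Complex.I) + Real.pi * Complex.I
        + ((-(2 * Real.pi * M * f.im) : ℝ) : ℂ) by
        push_cast; linear_combination (2 * Real.pi * M * f.im : ℂ) * Complex.I_sq]
    rw [Complex.exp_add, Complex.exp_add, Complex.exp_int_mul_two_pi_mul_I, Complex.exp_pi_mul_I,
      Complex.ofReal_exp]
    ring
  rw [this, show -((Real.exp (-(2 * Real.pi * M * f.im)) : ℝ) : ℂ) - 1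
    = -((Real.exp (-(2 * Real.pi * M * f.im)) + 1 : ℝ) : ℂ) by push_cast; ring, norm_neg,
    Complex.norm_real, Real.norm_of_nonneg (by positivity)]

lemma analytic_aux (p : Polynomial ℂ) (N M L : ℕ) (hM : 0 < M) (hNM : N ≤ M) (A : ℝ) (hA : 0 ≤ A)
    (hp1 : ∀ z, ‖z‖ ≤ 1 → ‖p.eval z‖ ≤ A) (hp2 : ∀ z, 1 ≤ ‖z‖ → ‖p.eval z‖ ≤ A * ‖z ^ N‖)
    (hp : ∀ ζ ∈ nodes M L, p.eval ζ = 0)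
    (a h c E x₀ : ℝ) (ha : 0 < a) (hh : 0 < h) (hc : 0 ≤ c)
    (hx : |x₀| + a ≤ ((L : ℝ) + 1 / 2) / M) (hexp : Real.exp (-(2 * Real.pi * M * h)) ≤ 1 / 2)
    (hE1 : c * (h ^ 2 - a ^ 2) ≤ -E)
    (hE2 : c * h ^ 2 - Real.pi * ((M : ℝ) - N) * h ≤ -E) :
    ‖p.eval (zpt x₀)‖ ≤ 4 * A * Real.exp (-E) := by
  obtain ⟨q, S, hS, hqS⟩ := factor_aux M hM (nodes M L) (nodes_pow M L hM) p hp
  set X : ℝ := ((L : ℝ) + 1 / 2) / M with hX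
  have hX0 : 0 < X := by have := abs_nonneg x₀; linarith
  have hSne : ∀ f : ℂ, |f.re| ≤ X → S.eval (zpt f) ≠ 0 := by
    intro f hf h0
    obtain ⟨h1, h2⟩ := hS _ h0
    exact h2 (mem_nodes M L hM f hf h1)
  let H : ℂ → ℂ := fun f => Complex.exp (Real.pi * Complex.I * ((M : ℂ) - N) * f) *
    (q.eval (zpt f) / S.eval (zpt f)) * Complex.exp (-(c : ℂ) * (f - x₀) ^ 2)
  have hzd : Differentiable ℂ zpt := by unfold zpt; fun_prop
  have hcl : closure (Set.Ioo (-X) X ×ℂ Set.Ioo (-h) h) = Set.Icc (-X) X ×ℂ Set.Icc (-h) h := by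
    rw [Complex.closure_reProdIm, closure_Ioo (by linarith), closure_Ioo (by linarith)]
  have hdiff : DiffContOnCl ℂ H (Set.Ioo (-X) X ×ℂ Set.Ioo (-h) h) := by
    apply DifferentiableOn.diffContOnCl
    rw [hcl]
    intro f hf
    have hne := hSne f (abs_le.2 hf.1)
    apply DifferentiableAt.differentiableWithinAt
    have hz := hzd f
    have e1 : DifferentiableAt ℂ (fun f => q.eval (zpt f)) f :=
      (q.differentiable _).comp f hz
    have e2 : DifferentiableAt ℂ (fun f => S.eval (zpt f)) f :=
      (S.differentiable _).comp f hz
    exact ((by fun_prop : DifferentiableAt ℂ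
      (fun f => Complex.exp (Real.pi * Complex.I * ((M : ℂ) - N) * f)) f).mul (e1.div e2 hne)).mul
      (by fun_prop)
  have hNM' : (0 : ℝ) ≤ (M : ℝ) - N := by
    have : (N : ℝ) ≤ M := by exact_mod_cast hNM
    linarith
  have hnorm : ∀ f : ℂ, |f.re| ≤ X → zpt f ^ M - 1 ≠ 0 → ‖H f‖ =
      (Real.exp (-(Real.pi * ((M : ℝ) - N) * f.im)) * (‖p.eval (zpt f)‖ / ‖zpt f ^ M - 1‖)) *
        Real.exp (c * (f.im ^ 2 - (f.re - x₀) ^ 2)) := by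
    intro f hf hne
    have hq : q.eval (zpt f) / S.eval (zpt f) = p.eval (zpt f) / (zpt f ^ M - 1) := by
      rw [div_eq_div_iff (hSne f hf) hne, hqS]
    simp only [H]
    rw [hq, norm_mul, norm_mul, norm_div, Complex.norm_exp, Complex.norm_exp]
    congr 2
    · congr 2
      simp
    · simp [pow_two]
      ring
  have hbound : ∀ D : ℝ, 0 < D → 1 / 2 ≤ D → ∀ f : ℂ, |f.re| ≤ X →
      (0 ≤ f.im → D ≤ ‖zpt f ^ M - 1‖) →
      (f.im ≤ 0 → D * Real.exp (-(2 * Real.pi * M * f.im)) ≤ ‖zpt f ^ M - 1‖) →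
      -(Real.pi * ((M : ℝ) - N) * |f.im|) + c * (f.im ^ 2 - (f.re - x₀) ^ 2) ≤ -E →
      ‖H f‖ ≤ 2 * A * Real.exp (-E) := by
    intro D hD hD2 f hf h1 h2 h3
    have hne : zpt f ^ M - 1 ≠ 0 := by
      rw [← norm_pos_iff]
      rcases le_total 0 f.im with h' | h'
      · exact hD.trans_le (h1 h')
      · exact lt_of_lt_of_le (by positivity) (h2 h')
    rw [hnorm f hf hne]
    calc _ ≤ (A / D * Real.exp (-(Real.pi * ((M : ℝ) - N) * |f.im|))) *
          Real.exp (c * (f.im ^ 2 - (f.re - x₀) ^ 2)) := by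
          exact mul_le_mul_of_nonneg_right (quot_bound p N M A D hA hD hp1 hp2 f h1 h2)
            (Real.exp_pos _).le
      _ = A / D * Real.exp (-(Real.pi * ((M : ℝ) - N) * |f.im|)
            + c * (f.im ^ 2 - (f.re - x₀) ^ 2)) := by
          rw [Real.exp_add]; ring
      _ ≤ 2 * A * Real.exp (-E) := by
          gcongr
          rw [div_le_iff₀ hD]
          nlinarith
  have hmax : ∀ f ∈ closure (Set.Ioo (-X) X ×ℂ Set.Ioo (-h) h), ‖H f‖ ≤ 2 * A * Real.exp (-E) := by
    intro f hf
    refine Complex.norm_le_of_forall_mem_frontier_norm_le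
      ((Metric.isBounded_Ioo _ _).reProdIm (Metric.isBounded_Ioo _ _)) hdiff ?_ hf
    intro w hw
    rw [Complex.frontier_reProdIm, closure_Ioo (by linarith), closure_Ioo (by linarith),
      frontier_Ioo (by linarith), frontier_Ioo (by linarith)] at hw
    rcases hw with hw | hw
    · obtain ⟨hre, him⟩ := hw
      have him' : w.im = -h ∨ w.im = h := by simpa using him
      have hex : 2 * Real.exp (-(2 * Real.pi * M * h)) ≤ 1 := by linarith
      refine hbound (1 / 2) (by norm_num) le_rfl w (abs_le.2 hre) ?_ ?_ ?_
      · intro h0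
        have e : w.im = h := by rcases him' with e | e <;> linarith
        have t := norm_sub_norm_le (1 : ℂ) (zpt w ^ M)
        rw [norm_sub_rev, norm_zpt_pow, e, norm_one] at t
        linarith
      · intro h0
        have e : w.im = -h := by rcases him' with e | e <;> linarith
        have t := norm_sub_norm_le (zpt w ^ M) (1 : ℂ)
        rw [norm_zpt_pow, e, norm_one] at t
        rw [e]
        have u : Real.exp (-(2 * Real.pi * M * -h)) * Real.exp (-(2 * Real.pi * M * h)) = 1 := by
          rw [← Real.exp_add]; simp
        have := Real.exp_pos (-(2 * Real.pi * M * -h))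
        nlinarith
      · have e : |w.im| = h := by
          rcases him' with e | e <;> rw [e] <;> simp [abs_of_pos hh]
        have e2 : w.im ^ 2 = h ^ 2 := by rw [← sq_abs, e]
        rw [e, e2]
        have := mul_nonneg hc (sq_nonneg (w.re - x₀))
        linarith
    · obtain ⟨hre, him⟩ := hw
      have hre' : w.re = -X ∨ w.re = X := by simpa using hre
      have hv := lower_vert M L hM w hre'.symm
      have hpos := Real.exp_pos (-(2 * Real.pi * M * w.im))
      refine hbound 1 one_pos (by norm_num) w ?_ ?_ ?_ ?_
      · rcases hre' with e | e <;> rw [e] <;> simp [abs_of_pos hX0]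
      · intro _; rw [hv]; linarith
      · intro _; rw [hv]; linarith
      · have e1 : w.im ^ 2 ≤ h ^ 2 := by
          rw [← sq_abs w.im]
          have := abs_le.2 him
          gcongr
        have e2 : a ^ 2 ≤ (w.re - x₀) ^ 2 := by
          have := neg_abs_le x₀
          have := le_abs_self x₀
          rcases hre' with e | e
          · rw [e]; nlinarith
          · rw [e]; nlinarith
        have e3 : 0 ≤ Real.pi * ((M : ℝ) - N) * |w.im| := by
          have := Real.pi_pos
          positivity
        have : c * (w.im ^ 2 - (w.re - x₀) ^ 2) ≤ c * (h ^ 2 - a ^ 2) := by gcongr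
        linarith
  have hx1 : |x₀| ≤ X := by linarith
  have h0 := hmax x₀ (by
    rw [hcl]
    refine ⟨?_, ?_⟩
    · simpa using abs_le.1 hx1
    · simp [hh.le])
  have hzn : ‖zpt x₀ ^ M‖ = 1 := by rw [norm_zpt_pow]; simp
  by_cases hne : zpt x₀ ^ M - 1 = 0
  · rw [hp _ (mem_nodes M L hM x₀ (by rw [Complex.ofReal_re]; exact hx1) (sub_eq_zero.1 hne))]
    simp; positivity
  · rw [hnorm x₀ (by simpa using hx1) hne] at h0
    simp at h0
    have hle : ‖zpt x₀ ^ M - 1‖ ≤ 2 := by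
      refine (norm_sub_le _ _).trans ?_
      rw [hzn]; norm_num
    rw [div_le_iff₀ (norm_pos_iff.2 hne)] at h0
    have : 0 ≤ 2 * A * Real.exp (-E) := by positivity
    nlinarith

lemma quad_aux (N : ℕ) (W : ℝ) (hW : 0 < W) (v : Fin N → ℂ) (b : ℝ)
    (hb : ∀ x : ℝ, |x| ≤ W → ‖∑ n, v n * zpt x ^ (n : ℕ)‖ ≤ b) :
    (star v ⬝ᵥ prolate1D N (Set.Icc (-W) W) *ᵥ v).re ≤ 2 * W * b ^ 2 := by
  have hint : star v ⬝ᵥ prolate1D N (Set.Icc (-W) W) *ᵥ v =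
      ∫ f in Set.Icc (-W) W, ∑ m : Fin N, ∑ n : Fin N, star (v m) * v n *
        Complex.exp (2 * (Real.pi : ℂ) * Complex.I * (f : ℂ) *
          (((m : ℕ) : ℂ) - ((n : ℕ) : ℂ))) := by
    have hi : ∀ (k : ℂ) (m n : Fin N), IntegrableOn (fun f : ℝ => k *
        Complex.exp (2 * (Real.pi : ℂ) * Complex.I * (f : ℂ) *
          (((m : ℕ) : ℂ) - ((n : ℕ) : ℂ)))) (Set.Icc (-W) W) := by
      intro k m n
      apply Continuous.integrableOn_Icc
      fun_prop
    rw [integral_finsetSum _ (fun m _ => integrable_finsetSum _ (fun n _ => hi _ m n))]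
    simp only [dotProduct, mulVec, Pi.star_apply]
    refine Finset.sum_congr rfl fun m _ => ?_
    rw [integral_finsetSum _ (fun n _ => hi _ m n), Finset.mul_sum]
    refine Finset.sum_congr rfl fun n _ => ?_
    rw [integral_const_mul, prolate1D]
    ring
  have hpt : ∀ f : ℝ, ∑ m : Fin N, ∑ n : Fin N, star (v m) * v n *
        Complex.exp (2 * (Real.pi : ℂ) * Complex.I * (f : ℂ) *
          (((m : ℕ) : ℂ) - ((n : ℕ) : ℂ))) =
      star (∑ n, v n * zpt ((-f : ℝ) : ℂ) ^ (n : ℕ)) * (∑ n, v n * zpt ((-f : ℝ) : ℂ) ^ (n : ℕ)) := by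
    intro f
    rw [star_sum, Finset.sum_mul_sum]
    refine Finset.sum_congr rfl fun m _ => Finset.sum_congr rfl fun n _ => ?_
    rw [zpt_pow, zpt_pow, star_mul, Complex.star_def, ← Complex.exp_conj]
    simp only [map_mul, Complex.conj_I, Complex.conj_ofReal, map_natCast, map_ofNat]
    rw [show 2 * (Real.pi : ℂ) * Complex.I * (f : ℂ) * (((m : ℕ) : ℂ) - ((n : ℕ) : ℂ))
      = 2 * (Real.pi : ℂ) * -Complex.I * (((m : ℕ) : ℂ) * ((-f : ℝ) : ℂ)) +
        2 * (Real.pi : ℂ) * Complex.I * (((n : ℕ) : ℂ) * ((-f : ℝ) : ℂ)) by push_cast; ring,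
      Complex.exp_add]
    ring
  refine (Complex.re_le_norm _).trans ?_
  rw [hint]
  have := norm_setIntegral_le_of_norm_le_const (μ := volume) (s := Set.Icc (-W) W) (C := b ^ 2)
    (f := fun f : ℝ => ∑ m : Fin N, ∑ n : Fin N, star (v m) * v n *
        Complex.exp (2 * (Real.pi : ℂ) * Complex.I * (f : ℂ) *
          (((m : ℕ) : ℂ) - ((n : ℕ) : ℂ)))) (by simp) (by
      intro f hf
      rw [hpt, norm_mul, norm_star, ← pow_two]
      have := hb (-f) (by rw [abs_neg]; exact abs_le.2 hf)
      gcongr)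
  refine this.trans (le_of_eq ?_)
  rw [Real.volume_real_Icc_of_le (by linarith)]
  ring

theorem dpss_eigenvalue_cluster_near_zero
    (W : ℝ) (hW : W ∈ Set.Ioo (0 : ℝ) (1 / 2)) (ε : ℝ)
    (hε : ε ∈ Set.Ioo (0 : ℝ) (1 / (2 * W) - 1)) :
    ∃ (C₃ C₄ : ℝ) (N₂ : ℕ), 0 < C₃ ∧ 0 < C₄ ∧ 1 ≤ N₂ ∧
      ∀ (N : ℕ), N₂ ≤ N →
        ∀ (hA : (prolate1D N (Set.Icc (-W) W)).IsHermitian) (μ : Fin N → ℝ),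
          Antitone μ →
          (∃ σ : Equiv.Perm (Fin N), hA.eigenvalues = μ ∘ σ) →
          ∀ l : Fin N, ⌈2 * (N : ℝ) * W * (1 + ε)⌉₊ ≤ (l : ℕ) →
            μ l ≤ C₃ * Real.exp (-C₄ * (N : ℝ)) := by
  have hW0 : 0 < W := hW.1
  have hε0 : 0 < ε := hε.1
  obtain ⟨δ, hδ0, hδ⟩ : ∃ δ : ℝ, 0 < δ ∧ (1 + δ) ^ 2 < 1 + ε := by
    refine ⟨min (ε / 4) 1, by positivity, ?_⟩
    have h1 : min (ε / 4) 1 ≤ ε / 4 := min_le_left _ _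
    have h2 : min (ε / 4) 1 ≤ 1 := min_le_right _ _
    have h3 : 0 < min (ε / 4) 1 := by positivity
    nlinarith
  have hpi := Real.pi_pos
  set a : ℝ := δ * W with ha
  have ha0 : 0 < a := by positivity
  set κ : ℝ := Real.pi * δ * a / 4 with hκ
  have hκ0 : 0 < κ := by positivity
  have hgap : 0 < 2 * W * ((1 + ε) - (1 + δ) ^ 2) := by
    have : 0 < (1 + ε) - (1 + δ) ^ 2 := by linarith
    positivity
  refine ⟨32 * W / κ, κ, max 1 (max ⌈1 / a⌉₊
    ⌈(2 * W * (1 + δ) + 3) / (2 * W * ((1 + ε) - (1 + δ) ^ 2))⌉₊), by positivity, hκ0,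
    le_max_left _ _, ?_⟩
  intro N hN hA μ hμ hσ l hl
  obtain ⟨σ, hσ⟩ := hσ
  have hN1 : 1 ≤ N := (le_max_left _ _).trans hN
  have hNa : 1 / a ≤ (N : ℝ) :=
    Nat.ceil_le.1 (((le_max_left _ _).trans (le_max_right _ _)).trans hN)
  have hNg : (2 * W * (1 + δ) + 3) / (2 * W * ((1 + ε) - (1 + δ) ^ 2)) ≤ (N : ℝ) :=
    Nat.ceil_le.1 (((le_max_right _ _).trans (le_max_right _ _)).trans hN)
  rw [div_le_iff₀ ha0] at hNa
  rw [div_le_iff₀ hgap] at hNg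
  have hNr : (1 : ℝ) ≤ N := by exact_mod_cast hN1
  have hl' : 2 * (N : ℝ) * W * (1 + ε) ≤ (l : ℕ) := Nat.ceil_le.1 hl
  set M : ℕ := ⌈(N : ℝ) * (1 + δ)⌉₊ with hMdef
  have hM1 : (N : ℝ) * (1 + δ) ≤ M := Nat.le_ceil _
  have hM2 : (M : ℝ) < (N : ℝ) * (1 + δ) + 1 := Nat.ceil_lt_add_one (by positivity)
  have hNδ : 0 < (N : ℝ) * δ := by positivity
  have hMN : (N : ℝ) ≤ M := by linarith
  have hMr : (0 : ℝ) < M := by linarith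
  have hM0 : 0 < M := by exact_mod_cast hMr
  set L : ℕ := ⌈(M : ℝ) * (W + a)⌉₊ with hLdef
  have hL1 : (M : ℝ) * (W + a) ≤ L := Nat.le_ceil _
  have hL2 : (L : ℝ) < (M : ℝ) * (W + a) + 1 := Nat.ceil_lt_add_one (by positivity)
  have hcard : (nodes M L).card ≤ (l : ℕ) := by
    refine (card_nodes M L).trans ?_
    have : ((2 * L + 1 : ℕ) : ℝ) ≤ ((l : ℕ) : ℝ) := by
      push_cast
      have e : (M : ℝ) * (W + a) ≤ ((N : ℝ) * (1 + δ) + 1) * (W * (1 + δ)) := by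
        rw [show W + a = W * (1 + δ) by rw [ha]; ring]
        gcongr
      nlinarith
    exact_mod_cast this
  obtain ⟨v, hv0, hvK, hvq⟩ := minmax_aux _ hA μ hμ σ hσ l (nodes M L) hcard
  set p : Polynomial ℂ := ∑ n : Fin N, Polynomial.C (v n) * Polynomial.X ^ (n : ℕ) with hpdef
  have hpe : ∀ z, p.eval z = ∑ n : Fin N, v n * z ^ (n : ℕ) := by
    intro z
    simp [hpdef, Polynomial.eval_finsetSum]
  set A : ℝ := ∑ n, ‖v n‖ with hAdef
  have hA0 : 0 ≤ A := Finset.sum_nonneg fun _ _ => norm_nonneg _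
  have hp1 : ∀ z : ℂ, ‖z‖ ≤ 1 → ‖p.eval z‖ ≤ A := by
    intro z hz
    rw [hpe]
    refine (norm_sum_le _ _).trans (Finset.sum_le_sum fun n _ => ?_)
    rw [norm_mul, norm_pow]
    exact mul_le_of_le_one_right (norm_nonneg _) (pow_le_one₀ (norm_nonneg _) hz)
  have hp2 : ∀ z : ℂ, 1 ≤ ‖z‖ → ‖p.eval z‖ ≤ A * ‖z ^ N‖ := by
    intro z hz
    rw [hpe, hAdef, Finset.sum_mul]
    refine (norm_sum_le _ _).trans (Finset.sum_le_sum fun n _ => ?_)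
    rw [norm_mul, norm_pow, norm_pow]
    gcongr
    exact n.isLt.le
  have hmain : ∀ x : ℝ, |x| ≤ W → ‖∑ n, v n * zpt x ^ (n : ℕ)‖ ≤ 4 * A * Real.exp (-(κ * N)) := by
    intro x hx
    rw [← hpe]
    refine analytic_aux p N M L hM0 (by exact_mod_cast hMN) A hA0 hp1 hp2
      (fun ζ hζ => by rw [hpe]; exact hvK ζ hζ) a (a / 2) (Real.pi * δ * N / a) (κ * N) x ha0
      (by positivity) (by positivity) ?_ ?_ ?_ ?_
    · rw [le_div_iff₀ hMr]
      nlinarith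
    · have h1 : 1 ≤ 2 * Real.pi * M * (a / 2) := by
        have : 1 ≤ (M : ℝ) * a := hNa.trans (by gcongr)
        have := Real.pi_gt_three
        nlinarith
      calc Real.exp (-(2 * Real.pi * M * (a / 2))) ≤ Real.exp (-1) := by
            apply Real.exp_le_exp.2; linarith
        _ ≤ 1 / 2 := by
            have := Real.exp_neg_one_lt_d9
            linarith
    · have e : Real.pi * δ * N / a * ((a / 2) ^ 2 - a ^ 2) = -(3 * (κ * N)) := by
        rw [hκ]; field_simp; ring
      rw [e]
      have : 0 < κ * N := by positivity
      linarith
    · have e : Real.pi * δ * N / a * (a / 2) ^ 2 = κ * N := by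
        rw [hκ]; field_simp; ring
      rw [e]
      have e2 : Real.pi * (N * δ) * (a / 2) ≤ Real.pi * ((M : ℝ) - N) * (a / 2) := by
        gcongr
        linarith
      have e3 : Real.pi * (N * δ) * (a / 2) = 2 * (κ * N) := by rw [hκ]; ring
      linarith
  have hq := hvq.trans (quad_aux N W hW0 v _ hmain)
  set s : ℝ := ∑ n, ‖v n‖ ^ 2 with hs
  have hs0 : 0 < s := by
    obtain ⟨i, hi⟩ := Function.ne_iff.1 hv0
    refine Finset.sum_pos' (fun _ _ => by positivity) ⟨i, Finset.mem_univ _, ?_⟩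
    have : 0 < ‖v i‖ := norm_pos_iff.2 hi
    positivity
  have hcs : A ^ 2 ≤ N * s := by
    have := sq_sum_le_card_mul_sum_sq (s := (Finset.univ : Finset (Fin N))) (f := fun n => ‖v n‖)
    simpa using this
  have hexpN : κ * N * Real.exp (-(κ * N)) ≤ 1 := by
    have h1 := Real.add_one_le_exp (κ * N)
    have h2 : Real.exp (κ * N) * Real.exp (-(κ * N)) = 1 := by rw [← Real.exp_add]; simp
    have h3 := Real.exp_pos (-(κ * N))
    nlinarith
  rw [neg_mul]
  set x : ℝ := Real.exp (-(κ * N)) with hx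
  have hx0 : 0 < x := Real.exp_pos _
  have h1 : μ l * s ≤ (32 * W / κ * x) * s := by
    calc μ l * s ≤ 2 * W * (4 * A * x) ^ 2 := hq
      _ = 32 * W * x ^ 2 * A ^ 2 := by ring
      _ ≤ 32 * W * x ^ 2 * (N * s) := by gcongr
      _ = (32 * W / κ * x) * s * (κ * N * x) := by field_simp
      _ ≤ (32 * W / κ * x) * s * 1 := by gcongr
      _ = _ := by ring
  exact le_of_mul_le_mul_right h1 hs0
end

section
/- Let 𝕎 = ⋃_{i=0}^{J−1} [f_i − W_i, f_i + W_i] ⊆ [−1/2, 1/2] be a union of J ≥ 1 pairwise disjoint closed intervals with half-widths W_i ∈ (0, 1/2) and total measure ‖𝕎‖ = Σ_i 2W_i, and fix ε ∈ (0, 1/‖𝕎‖ − 1). Then there exist constants Ĉ₃ > 0, Ĉ₄ > 0 and an integer N̂₂ ≥ 1 (depending only on 𝕎 and ε) such that for every N ≥ N̂₂ and every index l with Σ_{i=0}^{J−1} ⌈2NW_i(1+ε)⌉ ≤ l ≤ N−1, the l-th eigenvalue satisfies λ_{N,𝕎}^{(l)} ≤ Ĉ₃·e^{−Ĉ₄·N}.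 -/
open MeasureTheory Matrix Real Set

open Polynomial in
lemma aux_interp (L : ℕ) (hL : 0 < L) (P : ℂ[X]) (hP : P.natDegree < L) (z : ℂ) (hz : ‖z‖ = 1) :
    ‖P.eval z‖ ≤ ∑ j ∈ Finset.range L,
      ‖P.eval (Complex.exp (2 * π * Complex.I / L) ^ j)‖ := by
  have hprim := Complex.isPrimitiveRoot_exp L hL.ne'
  set ζ := Complex.exp (2 * π * Complex.I / L) with hζ
  have hζ0 : ζ ≠ 0 := Complex.exp_ne_zero _
  have hζn : ‖ζ‖ = 1 := hprim.norm'_eq_one hL.ne'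
  have hLc : (L : ℂ) ≠ 0 := by exact_mod_cast hL.ne'
  have hcoef : ∀ n < L, ∑ j ∈ Finset.range L, P.eval (ζ ^ j) * (ζ ^ n)⁻¹ ^ j = L * P.coeff n := by
    intro n hn
    have h1 : ∀ j, P.eval (ζ ^ j) = ∑ m ∈ Finset.range L, P.coeff m * (ζ ^ j) ^ m :=
      fun j => Polynomial.eval_eq_sum_range' hP _
    simp_rw [h1, Finset.sum_mul]
    rw [Finset.sum_comm, Finset.sum_eq_single n]
    · have : ∀ j ∈ Finset.range L, P.coeff n * (ζ ^ j) ^ n * (ζ ^ n)⁻¹ ^ j = P.coeff n := by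
        intro j _
        rw [inv_pow, ← pow_mul, ← pow_mul, mul_comm n j, mul_assoc,
          mul_inv_cancel₀ (pow_ne_zero _ hζ0), mul_one]
      rw [Finset.sum_congr rfl this]
      simp
    · intro m hm hmn
      rw [Finset.mem_range] at hm
      have h2 : ∀ j ∈ Finset.range L, P.coeff m * (ζ ^ j) ^ m * (ζ ^ n)⁻¹ ^ j
          = P.coeff m * (ζ ^ m * (ζ ^ n)⁻¹) ^ j := by
        intro j _
        rw [mul_pow, ← pow_mul, ← pow_mul, mul_comm j m, mul_assoc]
      rw [Finset.sum_congr rfl h2, ← Finset.mul_sum]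
      have h3 : ζ ^ m * (ζ ^ n)⁻¹ ≠ 1 := by
        intro h
        rw [mul_inv_eq_one₀ (pow_ne_zero _ hζ0)] at h
        exact hmn (hprim.pow_inj hm hn h)
      rw [geom_sum_eq h3, mul_pow, inv_pow, ← pow_mul, ← pow_mul, mul_comm m, mul_comm n, pow_mul,
        pow_mul, hprim.pow_eq_one]
      simp
    · intro h; exact absurd (Finset.mem_range.2 hn) h
  set S := ∑ j ∈ Finset.range L, ‖P.eval (ζ ^ j)‖ with hS
  have hb : ∀ n ∈ Finset.range L, ‖P.coeff n * z ^ n‖ ≤ S / L := by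
    intro n hn
    rw [Finset.mem_range] at hn
    rw [norm_mul, norm_pow, hz, one_pow, mul_one, le_div_iff₀ (by exact_mod_cast hL), mul_comm]
    have := congrArg norm (hcoef n hn)
    rw [norm_mul, Complex.norm_natCast] at this
    rw [← this]
    refine (norm_sum_le _ _).trans (le_of_eq ?_)
    refine Finset.sum_congr rfl fun j _ => ?_
    simp [hζn]
  rw [Polynomial.eval_eq_sum_range' hP]
  refine (norm_sum_le _ _).trans ((Finset.sum_le_sum hb).trans (le_of_eq ?_))
  have : (L : ℝ) ≠ 0 := by exact_mod_cast hL.ne'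
  simp; field_simp

lemma aux_half (u : ℝ) : ‖(1 / 2 : ℂ) * (1 + Complex.exp (2 * π * Complex.I * u))‖ = |cos (π * u)| := by
  have h : (1 / 2 : ℂ) * (1 + Complex.exp (2 * π * Complex.I * u))
      = Complex.exp (((π * u : ℝ) : ℂ) * Complex.I) * ((cos (π * u) : ℝ) : ℂ) := by
    rw [Complex.ofReal_cos, Complex.cos]
    have h1 : Complex.exp (2 * π * Complex.I * u) = Complex.exp (((π * u : ℝ) : ℂ) * Complex.I) *
        Complex.exp (((π * u : ℝ) : ℂ) * Complex.I) := by
      rw [← Complex.exp_add]; congr 1; push_cast; ring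
    have h2 : Complex.exp (((π * u : ℝ) : ℂ) * Complex.I) *
        Complex.exp (-((π * u : ℝ) : ℂ) * Complex.I) = 1 := by
      rw [← Complex.exp_add, ← Complex.exp_zero]; congr 1; ring
    rw [h1]
    linear_combination (-1 / 2 : ℂ) * h2
  rw [h, norm_mul, Complex.norm_exp_ofReal_mul_I, one_mul, Complex.norm_real, Real.norm_eq_abs]

open Polynomial in
lemma aux_local (N s : ℕ) (P : ℂ[X]) (hP : P.natDegree < N) (t : ℝ) :
    ‖P.eval (Complex.exp (2 * π * Complex.I * t))‖ ≤ ∑ j ∈ Finset.range (N + s),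
      ‖P.eval (Complex.exp (2 * π * Complex.I * ((j / (N + s : ℕ) : ℝ) : ℂ)))‖ *
        |cos (π * (j / (N + s : ℕ) - t))| ^ s := by
  set F : ℂ[X] := C (1 / 2) * (1 + C (Complex.exp (2 * π * Complex.I * (-t))) * X) with hF
  have hFd : F.natDegree ≤ 1 := by
    rw [hF]; compute_degree
  have hd : (P * F ^ s).natDegree < N + s := by
    have h1 : (P * F ^ s).natDegree ≤ P.natDegree + (F ^ s).natDegree := natDegree_mul_le
    have h2 : (F ^ s).natDegree ≤ s * F.natDegree := natDegree_pow_le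
    have h3 : s * F.natDegree ≤ s * 1 := Nat.mul_le_mul_left _ hFd
    omega
  have hz : ‖Complex.exp (2 * π * Complex.I * t)‖ = 1 := by
    rw [Complex.norm_exp]; simp
  have hFe : ∀ u : ℝ, F.eval (Complex.exp (2 * π * Complex.I * u)) =
      (1 / 2 : ℂ) * (1 + Complex.exp (2 * π * Complex.I * ((u - t : ℝ) : ℂ))) := by
    intro u
    simp only [hF, eval_mul, eval_C, eval_add, eval_one, eval_X]
    rw [← Complex.exp_add]; congr 3; push_cast; ring_nf
  have := aux_interp (N + s) (by omega) _ hd _ hz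
  rw [eval_mul, eval_pow, hFe t] at this
  simp only [sub_self, Complex.ofReal_zero, mul_zero, Complex.exp_zero] at this
  norm_num at this
  refine (by simpa using this : _ ≤ _).trans (le_of_eq ?_)
  refine Finset.sum_congr rfl fun j _ => ?_
  have e : Complex.exp (2 * π * Complex.I / ((N : ℂ) + s)) ^ j =
      Complex.exp (2 * π * Complex.I * ((j / (N + s : ℕ) : ℝ) : ℂ)) := by
    rw [← Complex.exp_nat_mul]; congr 1; push_cast; ring
  rw [e, hFe, aux_half]

lemma aux_cos (δ u : ℝ) (hδ : 0 < δ) (h : ∀ n : ℤ, δ < |u - n|) : |cos (π * u)| ≤ cos (π * δ) := by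
  have h1 := h (round u)
  have h2 := abs_sub_round u
  have h3 : |cos (π * u)| = |cos (π * |u - round u|)| := by
    have : cos (π * |u - round u|) = cos (π * u - (round u : ℤ) * π) := by
      rw [← Real.cos_abs (π * u - _)]
      rw [show π * u - (round u : ℤ) * π = π * (u - round u) by ring, abs_mul, abs_of_pos pi_pos]
    rw [this, Real.cos_sub_int_mul_pi, abs_mul, abs_zpow]
    simp
  rw [h3, abs_of_nonneg]
  · apply Real.cos_le_cos_of_nonneg_of_le_pi
    · positivity
    · nlinarith [pi_pos]
    · nlinarith [pi_pos]
  · apply Real.cos_nonneg_of_neg_pi_div_two_le_of_le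
    · have : 0 ≤ π * |u - round u| := by positivity
      linarith [pi_pos]
    · nlinarith [pi_pos]

lemma aux_eig (N : ℕ) (A : Matrix (Fin N) (Fin N) ℂ) (hA : A.IsHermitian) (μ : Fin N → ℝ)
    (hμ : Antitone μ) (σ : Equiv.Perm (Fin N)) (hσ : hA.eigenvalues = μ ∘ σ) (l : Fin N)
    (ι : Type) [Fintype ι] (φ : (Fin N → ℂ) →ₗ[ℂ] (ι → ℂ)) (hι : Fintype.card ι ≤ l) (c : ℝ)
    (hc : ∀ x, φ x = 0 → (star x ⬝ᵥ A *ᵥ x).re ≤ c * ∑ n, ‖x n‖ ^ 2) : μ l ≤ c := by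
  classical
  let b := hA.eigenvectorBasis
  let ψ : EuclideanSpace ℂ (Fin N) →ₗ[ℂ] ({k : Fin N // l < σ k} → ℂ) :=
    LinearMap.pi fun k => (innerSL ℂ (b k)).toLinearMap
  let Φ : EuclideanSpace ℂ (Fin N) →ₗ[ℂ] (ι → ℂ) × ({k : Fin N // l < σ k} → ℂ) :=
    (φ ∘ₗ (WithLp.linearEquiv 2 ℂ (Fin N → ℂ)).toLinearMap).prod ψ
  have hcard : Fintype.card {k : Fin N // l < σ k} = N - 1 - l := by
    rw [Fintype.card_congr (σ.subtypeEquiv (q := fun k => l < k) (fun a => Iff.rfl))]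
    rw [Fintype.card_subtype]
    have : (Finset.univ.filter fun k => l < k) = Finset.Ioi l := by ext; simp
    rw [this, Fin.card_Ioi]
  have hker : LinearMap.ker Φ ≠ ⊥ := by
    apply LinearMap.ker_ne_bot_of_finrank_lt
    rw [Module.finrank_prod, Module.finrank_fintype_fun_eq_card, Module.finrank_fintype_fun_eq_card,
      finrank_euclideanSpace_fin, hcard]
    omega
  obtain ⟨x, hx, hx0⟩ := Submodule.exists_mem_ne_zero_of_ne_bot hker
  rw [LinearMap.mem_ker] at hx
  have hx1 : φ x.ofLp = 0 := congrArg Prod.fst hx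
  have hx2 : ∀ k, l < σ k → inner ℂ (b k) x = 0 := fun k hk =>
    congrFun (congrArg Prod.snd hx) ⟨k, hk⟩
  have hq := hc _ hx1
  have hn : ∑ n, ‖x n‖ ^ 2 = ‖x‖ ^ 2 := by rw [EuclideanSpace.norm_sq_eq]
  rw [hn] at hq
  have hquad : (star x.ofLp ⬝ᵥ A *ᵥ x.ofLp) = ∑ k, (hA.eigenvalues k : ℂ) * (‖inner ℂ (b k) x‖ ^ 2 : ℝ) := by
    have e1 : (star x.ofLp ⬝ᵥ A *ᵥ x.ofLp) = inner ℂ x (WithLp.toLp 2 (A *ᵥ x.ofLp)) := by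
      rw [EuclideanSpace.inner_eq_star_dotProduct, dotProduct_comm]
    rw [e1, ← b.sum_inner_mul_inner]
    refine Finset.sum_congr rfl fun k _ => ?_
    have e2 : inner ℂ (b k) (WithLp.toLp 2 (A *ᵥ x.ofLp)) = (hA.eigenvalues k : ℂ) * inner ℂ (b k) x := by
      rw [EuclideanSpace.inner_eq_star_dotProduct, EuclideanSpace.inner_eq_star_dotProduct]
      have := hA.mulVec_eigenvectorBasis k
      simp only
      have h5 : star (b k).ofLp ᵥ* A = star (A *ᵥ (b k).ofLp) := by rw [star_mulVec, hA.eq]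
      rw [dotProduct_comm, dotProduct_mulVec, h5, this, dotProduct_comm x.ofLp]
      simp [b]
    rw [e2, ← inner_conj_symm x (b k)]
    have := Complex.conj_mul' (inner ℂ (b k) x)
    push_cast
    rw [← this]; ring
  have hpars : ‖x‖ ^ 2 = ∑ k, ‖inner ℂ (b k) x‖ ^ 2 := (b.sum_sq_norm_inner_right x).symm
  have hlow : μ l * ‖x‖ ^ 2 ≤ (star x.ofLp ⬝ᵥ A *ᵥ x.ofLp).re := by
    rw [hquad, hpars, Finset.mul_sum, Complex.re_sum]
    refine Finset.sum_le_sum fun k _ => ?_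
    rw [← Complex.ofReal_mul, Complex.ofReal_re]
    by_cases hk : l < σ k
    · rw [hx2 k hk]; simp
    · apply mul_le_mul_of_nonneg_right _ (by positivity)
      rw [hσ]
      exact hμ (not_lt.1 hk)
  have hpos : 0 < ‖x‖ ^ 2 := by
    have := norm_pos_iff.2 hx0
    positivity
  exact le_of_mul_le_mul_right (hlow.trans hq) hpos

open Polynomial in
/-- The polynomial with coefficients `conj (x n)`. -/
noncomputable def auxPoly (N : ℕ) (x : Fin N → ℂ) : ℂ[X] :=
  ∑ n : Fin N, C (star (x n)) * X ^ (n : ℕ)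

lemma auxPoly_natDegree (N : ℕ) (hN : 0 < N) (x : Fin N → ℂ) : (auxPoly N x).natDegree < N := by
  refine lt_of_le_of_lt (b := N - 1) ?_ (by omega)
  refine Polynomial.natDegree_sum_le_of_forall_le _ _ fun n _ => ?_
  exact (Polynomial.natDegree_C_mul_X_pow_le _ _).trans (by omega)

lemma auxPoly_eval (N : ℕ) (x : Fin N → ℂ) (z : ℂ) :
    (auxPoly N x).eval z = ∑ n : Fin N, star (x n) * z ^ (n : ℕ) := by
  simp [auxPoly, Polynomial.eval_finsetSum]

lemma auxPoly_bound (N : ℕ) (x : Fin N → ℂ) (z : ℂ) (hz : ‖z‖ = 1) :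
    ‖(auxPoly N x).eval z‖ ^ 2 ≤ N * ∑ n, ‖x n‖ ^ 2 := by
  rw [auxPoly_eval]
  have h1 : ‖∑ n : Fin N, star (x n) * z ^ (n : ℕ)‖ ≤ ∑ n, ‖x n‖ := by
    refine (norm_sum_le _ _).trans (le_of_eq ?_)
    refine Finset.sum_congr rfl fun n _ => ?_
    simp [hz]
  refine (pow_le_pow_left₀ (norm_nonneg _) h1 2).trans ?_
  have := sq_sum_le_card_mul_sum_sq (s := Finset.univ) (f := fun n : Fin N => ‖x n‖)
  simpa using this

lemma aux_quad (N : ℕ) (x : Fin N → ℂ) (S : Set ℝ) (hS : IsCompact S) :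
    (star x ⬝ᵥ prolate1D N S *ᵥ x).re =
      ∫ f in S, ‖(auxPoly N x).eval (Complex.exp (2 * π * Complex.I * f))‖ ^ 2 := by
  have hint : ∀ m n : Fin N, IntegrableOn (fun f : ℝ => star (x m) * (Complex.exp (2 * (Real.pi : ℂ) *
      Complex.I * (f : ℂ) * (((m : ℕ) : ℂ) - ((n : ℕ) : ℂ))) * x n)) S := by
    intro m n
    refine ContinuousOn.integrableOn_compact hS (Continuous.continuousOn ?_)
    fun_prop
  have h1 : (star x ⬝ᵥ prolate1D N S *ᵥ x) = ∫ f in S, ∑ m : Fin N, ∑ n : Fin N,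
      star (x m) * (Complex.exp (2 * (Real.pi : ℂ) *
      Complex.I * (f : ℂ) * (((m : ℕ) : ℂ) - ((n : ℕ) : ℂ))) * x n) := by
    rw [integral_finsetSum]
    · simp only [dotProduct, mulVec, prolate1D, Finset.mul_sum]
      refine Finset.sum_congr rfl fun m _ => ?_
      rw [integral_finsetSum]
      · refine Finset.sum_congr rfl fun n _ => ?_
        rw [integral_const_mul, integral_mul_const]; rfl
      · intro n _; exact hint m n
    · intro m _
      exact integrable_finsetSum _ fun n _ => hint m n
  have h2 : ∀ f : ℝ, ∑ m : Fin N, ∑ n : Fin N,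
      star (x m) * (Complex.exp (2 * (Real.pi : ℂ) *
      Complex.I * (f : ℂ) * (((m : ℕ) : ℂ) - ((n : ℕ) : ℂ))) * x n) =
      ((‖(auxPoly N x).eval (Complex.exp (2 * π * Complex.I * f))‖ ^ 2 : ℝ) : ℂ) := by
    intro f
    have := Complex.mul_conj' ((auxPoly N x).eval (Complex.exp (2 * π * Complex.I * f)))
    push_cast
    rw [← this, auxPoly_eval, map_sum, Finset.sum_mul_sum]
    refine Finset.sum_congr rfl fun m _ => Finset.sum_congr rfl fun n _ => ?_
    rw [map_mul, map_pow, ← Complex.exp_conj, ← Complex.exp_nat_mul, ← Complex.exp_nat_mul]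
    have e : Complex.exp (2 * (Real.pi : ℂ) * Complex.I * (f : ℂ) * (((m : ℕ) : ℂ) - ((n : ℕ) : ℂ)))
      = Complex.exp ((m : ℕ) * (2 * π * Complex.I * f)) *
        Complex.exp ((n : ℕ) * (starRingEnd ℂ) (2 * π * Complex.I * f)) := by
      rw [← Complex.exp_add]; congr 1
      have h2 : (starRingEnd ℂ) 2 = 2 := Complex.conj_ofNat 2
      simp only [map_mul, h2, Complex.conj_I, Complex.conj_ofReal]; ring
    rw [e]
    simp; ring
  rw [h1]
  simp_rw [h2]
  rw [integral_complex_ofReal, Complex.ofReal_re]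

/-- Constraint functionals (evaluation at the given frequency). -/
noncomputable def auxPhi (N : ℕ) {ι : Type} (g : ι → ℝ) : (Fin N → ℂ) →ₗ[ℂ] (ι → ℂ) :=
  LinearMap.pi fun c => ∑ n : Fin N,
    star (Complex.exp (2 * π * Complex.I * g c) ^ (n : ℕ)) • LinearMap.proj n

lemma auxPhi_apply (N : ℕ) {ι : Type} (g : ι → ℝ) (x : Fin N → ℂ) (c : ι) :
    auxPhi N g x c = star ((auxPoly N x).eval (Complex.exp (2 * π * Complex.I * g c))) := by
  rw [auxPoly_eval, star_sum]
  simp [auxPhi, mul_comm]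

lemma aux_point (N s : ℕ) (hN : 0 < N) (x : Fin N → ℂ) (δ : ℝ) (hδ : 0 < δ) (hδ2 : δ < 1 / 2) (t : ℝ)
    (hx : ∀ j : ℤ, |t - j / (N + s : ℕ)| ≤ δ →
      (auxPoly N x).eval (Complex.exp (2 * π * Complex.I * ((j / (N + s : ℕ) : ℝ) : ℂ))) = 0) :
    ‖(auxPoly N x).eval (Complex.exp (2 * π * Complex.I * t))‖ ^ 2 ≤
      ((N + s : ℕ) * cos (π * δ) ^ s) ^ 2 * (N * ∑ n, ‖x n‖ ^ 2) := by
  have hρ : 0 ≤ cos (π * δ) := by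
    apply Real.cos_nonneg_of_neg_pi_div_two_le_of_le <;> nlinarith [pi_pos]
  set L := N + s with hL
  have hLpos : (0 : ℝ) < L := by have : 0 < L := by omega
                                 exact_mod_cast this
  set E := √(N * ∑ n, ‖x n‖ ^ 2) with hE
  have hE2 : E ^ 2 = N * ∑ n, ‖x n‖ ^ 2 := Real.sq_sqrt (by positivity)
  have hnorm : ∀ u : ℝ, ‖Complex.exp (2 * π * Complex.I * u)‖ = 1 := by
    intro u; rw [Complex.norm_exp]; simp
  have h1 := aux_local N s _ (auxPoly_natDegree N hN x) t
  have h2 : ∀ j ∈ Finset.range L,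
      ‖(auxPoly N x).eval (Complex.exp (2 * π * Complex.I * ((j / L : ℝ) : ℂ)))‖ *
        |cos (π * (j / L - t))| ^ s ≤ E * cos (π * δ) ^ s := by
    intro j _
    by_cases h0 : (auxPoly N x).eval (Complex.exp (2 * π * Complex.I * ((j / L : ℝ) : ℂ))) = 0
    · rw [h0]; simp; positivity
    · apply mul_le_mul
      · exact Real.le_sqrt_of_sq_le (auxPoly_bound N x _ (hnorm _))
      · apply pow_le_pow_left₀ (abs_nonneg _)
        apply aux_cos _ _ hδ
        intro n
        by_contra hcon
        rw [not_lt] at hcon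
        apply h0
        have := hx (j - n * L) (by
          rw [abs_sub_comm]
          have e : ((j - n * L : ℤ) : ℝ) / L - t = (j : ℝ) / L - t - n := by
            push_cast; field_simp; ring
          rw [e]; exact hcon)
        rw [← this]
        congr 1
        rw [Complex.exp_eq_exp_iff_exists_int]
        refine ⟨n, ?_⟩
        have : (L : ℂ) ≠ 0 := by exact_mod_cast hLpos.ne'
        push_cast; field_simp; ring
      · positivity
      · positivity
  have h3 := h1.trans (Finset.sum_le_sum h2)
  rw [Finset.sum_const, Finset.card_range, nsmul_eq_mul] at h3
  refine (pow_le_pow_left₀ (norm_nonneg _) h3 2).trans (le_of_eq ?_)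
  rw [← hE2]; ring

set_option maxHeartbeats 1000000 in
theorem multiband_eigenvalue_cluster_near_zero
    (J : ℕ) (hJ : 1 ≤ J) (f W : Fin J → ℝ)
    (hW : ∀ i, W i ∈ Set.Ioo (0 : ℝ) (1 / 2))
    (hsub : ∀ i, Set.Icc (f i - W i) (f i + W i) ⊆ Set.Icc (-(1 / 2) : ℝ) (1 / 2))
    (hdisj : ∀ i j, i ≠ j →
      Disjoint (Set.Icc (f i - W i) (f i + W i)) (Set.Icc (f j - W j) (f j + W j)))
    (ε : ℝ) (hε : ε ∈ Set.Ioo (0 : ℝ) (1 / (∑ i, 2 * W i) - 1)) :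
    ∃ (Chat₃ Chat₄ : ℝ) (Nhat₂ : ℕ), 0 < Chat₃ ∧ 0 < Chat₄ ∧ 1 ≤ Nhat₂ ∧
      ∀ (N : ℕ), Nhat₂ ≤ N →
        ∀ (hA : (prolate1D N (⋃ i, Set.Icc (f i - W i) (f i + W i))).IsHermitian)
          (μ : Fin N → ℝ),
          Antitone μ →
          (∃ σ : Equiv.Perm (Fin N), hA.eigenvalues = μ ∘ σ) →
          ∀ l : Fin N, (∑ i, ⌈2 * (N : ℝ) * W i * (1 + ε)⌉₊) ≤ (l : ℕ) →
            μ l ≤ Chat₃ * Real.exp (-Chat₄ * (N : ℝ)) := by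
  obtain ⟨hε0, -⟩ := hε
  -- a common lower bound for the widths
  obtain ⟨w, hw0, hw2, hwW⟩ : ∃ w : ℝ, 0 < w ∧ w < 1 / 2 ∧ ∀ i, w ≤ W i := by
    have : Nonempty (Fin J) := ⟨⟨0, hJ⟩⟩
    obtain ⟨i0, h0⟩ := Finite.exists_min W
    exact ⟨W i0, (hW i0).1, (hW i0).2, h0⟩
  set θ := min ε 1 / 6 with hθ
  have hθ0 : 0 < θ := by positivity
  have hθε : 6 * θ ≤ ε := by rw [hθ]; linarith [min_le_left ε 1]
  have hθ1 : 6 * θ ≤ 1 := by rw [hθ]; linarith [min_le_right ε 1]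
  set δ := θ * w with hδ
  have hδ0 : 0 < δ := by positivity
  have hδ2 : δ < 1 / 2 := by nlinarith
  set ρ := cos (π * δ) with hρ
  have hρ0 : 0 < ρ := by
    apply Real.cos_pos_of_mem_Ioo
    constructor <;> nlinarith [pi_pos]
  have hρ1 : ρ < 1 := by
    rw [hρ, ← Real.cos_zero]
    apply Real.cos_lt_cos_of_nonneg_of_le_pi le_rfl
    · nlinarith [pi_pos]
    · positivity
  set c := -Real.log ρ with hc
  have hc0 : 0 < c := by rw [hc]; linarith [Real.log_neg hρ0 hρ1]
  have hρc : ρ = Real.exp (-c) := by rw [hc, neg_neg, Real.exp_log hρ0]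
  set a := c * θ with ha
  have ha0 : 0 < a := by positivity
  set S : Set ℝ := ⋃ i, Set.Icc (f i - W i) (f i + W i) with hS
  have hScomp : IsCompact S := isCompact_iUnion fun i => isCompact_Icc
  have hSmeas : MeasurableSet S := hScomp.measurableSet
  have hSvol : volume.real S ≤ 1 := by
    have h1 : S ⊆ Set.Icc (-(1 / 2) : ℝ) (1 / 2) := Set.iUnion_subset hsub
    have h2 := measureReal_mono (μ := volume) h1 (by simp)
    refine h2.trans ?_
    rw [Real.volume_real_Icc]; norm_num
  refine ⟨4 * (6 / a ^ 3) * Real.exp (2 * c), a, max 1 ⌈1 / (w * ε)⌉₊, by positivity, ha0,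
    le_max_left _ _, ?_⟩
  intro N hNN hA μ hμ hσ l hl
  obtain ⟨σ, hσ⟩ := hσ
  have hN1 : 1 ≤ N := (le_max_left _ _).trans hNN
  have hN2 : 1 ≤ N * (w * ε) := by
    have h1 : 1 / (w * ε) ≤ N := (Nat.le_ceil _).trans (by exact_mod_cast (le_max_right _ _).trans hNN)
    rwa [div_le_iff₀ (by positivity)] at h1
  have hNr : (1 : ℝ) ≤ N := by exact_mod_cast hN1
  set s := ⌊θ * N⌋₊ with hs
  have hs1 : (s : ℝ) ≤ θ * N := Nat.floor_le (by positivity)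
  have hs2 : θ * N - 1 ≤ s := (Nat.sub_one_lt_floor _).le
  set L : ℕ := N + s with hL
  have hLr : (L : ℝ) = N + s := by rw [hL]; push_cast; ring
  have hLpos : (0 : ℝ) < L := by rw [hLr]; positivity
  let ι : Type := Σ i : Fin J,
    {j : ℤ // j ∈ Finset.Icc ⌈(f i - W i - δ) * L⌉ ⌊(f i + W i + δ) * L⌋}
  let g : ι → ℝ := fun c => (c.2.1 : ℝ) / L
  have hcard : Fintype.card ι ≤ l := by
    refine le_trans ?_ hl
    simp only [ι, Fintype.card_sigma, Fintype.card_coe, Int.card_Icc]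
    refine Finset.sum_le_sum fun i _ => ?_
    have hWi := hwW i
    rw [Int.toNat_le]
    have h1 : ((⌊(f i + W i + δ) * L⌋ : ℤ) : ℝ) + 1 - ((⌈(f i - W i - δ) * L⌉ : ℤ) : ℝ) ≤
        ((⌈2 * (N : ℝ) * W i * (1 + ε)⌉₊ : ℕ) : ℝ) := by
      have h2 := Int.floor_le ((f i + W i + δ) * L)
      have h3 := Int.le_ceil ((f i - W i - δ) * L)
      have h4 := Nat.le_ceil (2 * (N : ℝ) * W i * (1 + ε))
      have h5 : 2 * (W i + δ) * L + 1 ≤ 2 * (N : ℝ) * W i * (1 + ε) := by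
        have hWi0 : 0 < W i := (hW i).1
        have e1 : W i + δ ≤ W i * (1 + θ) := by rw [hδ]; nlinarith
        have e2 : (L : ℝ) ≤ (1 + θ) * N := by rw [hLr]; linarith
        have e3 : (W i + δ) * L ≤ (W i * (1 + θ)) * ((1 + θ) * N) :=
          mul_le_mul e1 e2 hLpos.le (by positivity)
        have e4 : (1 + θ) * (1 + θ) ≤ 1 + ε / 2 := by nlinarith
        have e5 : (W i * N) * ((1 + θ) * (1 + θ)) ≤ (W i * N) * (1 + ε / 2) :=
          mul_le_mul_of_nonneg_left e4 (by positivity)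
        have e6 : N * (w * ε) ≤ N * (W i * ε) := by gcongr
        nlinarith
      nlinarith
    exact_mod_cast h1
  refine (aux_eig N _ hA μ hμ σ hσ l ι (auxPhi N g) hcard ((L * ρ ^ s) ^ 2 * N) ?_).trans ?_
  · intro x hx
    rw [aux_quad N x S hScomp]
    set B := (L * ρ ^ s) ^ 2 * (N * ∑ n, ‖x n‖ ^ 2) with hB
    have hB0 : 0 ≤ B := by positivity
    have hpt : ∀ t ∈ S, ‖(auxPoly N x).eval (Complex.exp (2 * π * Complex.I * t))‖ ^ 2 ≤ B := by
      intro t ht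
      obtain ⟨i, hi⟩ := Set.mem_iUnion.1 ht
      apply aux_point N s hN1 x δ hδ0 hδ2 t
      intro j hj
      rw [abs_le] at hj
      have hj1 : (j : ℝ) / L ≤ f i + W i + δ := by linarith [hi.2, hj.1]
      have hj2 : f i - W i - δ ≤ (j : ℝ) / L := by linarith [hi.1, hj.2]
      rw [div_le_iff₀ hLpos] at hj1
      rw [le_div_iff₀ hLpos] at hj2
      have hmem : j ∈ Finset.Icc ⌈(f i - W i - δ) * L⌉ ⌊(f i + W i + δ) * L⌋ := by
        rw [Finset.mem_Icc]
        exact ⟨Int.ceil_le.2 hj2, Int.le_floor.2 hj1⟩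
      have := congrFun hx ⟨i, ⟨j, hmem⟩⟩
      rw [auxPhi_apply] at this
      exact star_eq_zero.1 this
    have h1 : ∫ t in S, ‖(auxPoly N x).eval (Complex.exp (2 * π * Complex.I * t))‖ ^ 2 ≤
        ∫ t in S, B := by
      apply setIntegral_mono_on _ _ hSmeas hpt
      · refine ContinuousOn.integrableOn_compact hScomp (Continuous.continuousOn ?_)
        fun_prop
      · exact continuous_const.continuousOn.integrableOn_compact hScomp
    refine h1.trans ?_
    rw [setIntegral_const, smul_eq_mul]
    calc volume.real S * B ≤ 1 * B := by gcongr
      _ = _ := by rw [hB]; ring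
  · have hL2 : (L : ℝ) ≤ 2 * N := by rw [hLr]; nlinarith
    have h1 : (ρ ^ s) ^ 2 ≤ Real.exp (2 * c) * Real.exp (-(2 * a * N)) := by
      rw [hρc, ← Real.exp_nat_mul, ← Real.exp_nat_mul, ← Real.exp_add, Real.exp_le_exp, ha]
      push_cast
      have := mul_le_mul_of_nonneg_left hs2 hc0.le
      linarith
    have h2 : (N : ℝ) ^ 3 ≤ 6 / a ^ 3 * Real.exp (a * N) := by
      have := Real.pow_div_factorial_le_exp (a * N) (by positivity) 3
      rw [div_mul_eq_mul_div, le_div_iff₀ (by positivity)]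
      simp [Nat.factorial] at this
      rw [mul_pow] at this
      linarith
    calc (L * ρ ^ s) ^ 2 * N = (L : ℝ) ^ 2 * N * (ρ ^ s) ^ 2 := by ring
      _ ≤ (2 * N) ^ 2 * N * (Real.exp (2 * c) * Real.exp (-(2 * a * N))) := by gcongr
      _ = 4 * (Real.exp (2 * c) * Real.exp (-(2 * a * N))) * (N : ℝ) ^ 3 := by ring
      _ ≤ 4 * (Real.exp (2 * c) * Real.exp (-(2 * a * N))) * (6 / a ^ 3 * Real.exp (a * N)) := by gcongr
      _ = 4 * (6 / a ^ 3) * Real.exp (2 * c) * (Real.exp (-(2 * a * N)) * Real.exp (a * N)) := by ring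
      _ = _ := by rw [← Real.exp_add]; congr 2; ring
end
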